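/- arXiv:1308.3543 — 6 statements merged into one kernel-verified Lean document; each statement's English description precedes it below -/
import Mathlib

section
/- There exists θ₀ ∈ (0,1) such that for every θ ∈ (0, θ₀) there exist a C^∞ function φ: ℝ → ℝ, a real number α ∈ (1,2), and a constant c ∈ (0,1) with the following properties: (i) φ(0) = 0, φ′(0) = 0, φ″(0) = 1, and φ′(t)/t → 1 as t → 0⁺; (ii) φ(t) > 0 and φ′(t) > 0 for every t > 0, the function t ↦ φ′(t)/t is strictly decreasing on (0,∞), and lim_{t→+∞} φ′(t)/t < θ; (iii) φ(t) = c·t^α for every t > 0 such that θ ≤ φ′(t)/t ≤ 1 − θ. -/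
open Set Filter Topology

/-!
Prescribe the quotient `g t = φ' t / t` and recover `φ t = ∫₀ᵗ s g(s) ds`. Let `-g'` be a positive
multiple of a profile `h > 0` equal to `s ^ (α - 3)` for `s ≥ 1`; then `g` is a positive, strictly
decreasing multiple of `∫ₜ^∞ h`, and it is a multiple of `t ^ (α - 2)` on `[1, ∞)`. An integration
by parts shows that `φ` agrees with a pure power `c t ^ α` there as soon as `∫₀¹ s² h = 1 / α`, and
this is arranged by choosing the value of `h` near `0`. Normalising `g 0 = 1`, we get
`g 1 ≥ 1 - (2 - α) ∫₀¹ h` with `∫₀¹ h` bounded independently of `α`. So for `α` close to `2`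
the value `g 1` is close to `1`, and the interval `[0, 1]`, where `φ` is not a power, is left
before the quotient falls to `1 - θ`.
-/

open MeasureTheory intervalIntegral
open scoped ContDiff

theorem contDiff_intervalIntegral {E : Type*} [NormedAddCommGroup E] [NormedSpace ℝ E]
    [CompleteSpace E] {n : ℕ∞} {f : ℝ → E} (hf : ContDiff ℝ n f) (a : ℝ) :
    ContDiff ℝ (n + 1) fun t => ∫ s in a..t, f s := by
  have hderiv (t : ℝ) : HasDerivAt (fun t => ∫ s in a..t, f s) (f t) t :=
    (hf.continuous.integral_hasStrictDerivAt a t).hasDerivAt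
  refine contDiff_succ_iff_deriv.2 ⟨fun t => (hderiv t).differentiableAt, by simp, ?_⟩
  rwa [funext fun t => (hderiv t).deriv]

/-- The function `φ` with `φ 0 = 0` and prescribed quotient `φ' t / t = g t`. -/
noncomputable def quotientPrimitive (g : ℝ → ℝ) (t : ℝ) : ℝ := ∫ s in (0 : ℝ)..t, s * g s

namespace quotientPrimitive

variable {g : ℝ → ℝ}

theorem apply_zero : quotientPrimitive g 0 = 0 := integral_same

theorem contDiff (hg : ContDiff ℝ ∞ g) : ContDiff ℝ ∞ (quotientPrimitive g) :=
  contDiff_intervalIntegral (contDiff_id.mul hg) 0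

theorem deriv_eq (hg : Continuous g) : deriv (quotientPrimitive g) = fun t => t * g t :=
  funext fun t => (continuous_id.mul hg).deriv_integral _ 0 t

theorem deriv_div_eq (hg : Continuous g) {t : ℝ} (ht : t ≠ 0) :
    deriv (quotientPrimitive g) t / t = g t := by
  rw [deriv_eq hg, mul_div_cancel_left₀ _ ht]

theorem deriv_deriv_zero (hg : Continuous g) :
    deriv (deriv (quotientPrimitive g)) 0 = g 0 := by
  refine HasDerivAt.deriv (hasDerivAt_iff_tendsto_slope_zero.2 ?_)
  refine (hg.continuousAt.tendsto.mono_left nhdsWithin_le_nhds).congr' ?_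
  filter_upwards [self_mem_nhdsWithin] with t ht
  simp [deriv_eq hg, inv_mul_cancel_left₀ (show t ≠ 0 from ht)]

theorem pos (hg : Continuous g) (hpos : ∀ s, 0 < s → 0 < g s) {t : ℝ} (ht : 0 < t) :
    0 < quotientPrimitive g t :=
  intervalIntegral_pos_of_pos_on ((continuous_id.mul hg).intervalIntegrable _ _)
    (fun s hs => mul_pos hs.1 (hpos s hs.1)) ht

theorem eq_rpow_of_le {α A a t : ℝ} (hg : Continuous g) (hα : α ≠ 0) (ha : 0 < a)
    (htail : ∀ s, a ≤ s → g s = A * s ^ (α - 2))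
    (hstart : quotientPrimitive g a = A / α * a ^ α) (hat : a ≤ t) :
    quotientPrimitive g t = A / α * t ^ α := by
  have hint (b c : ℝ) : IntervalIntegrable (fun s => s * g s) volume b c :=
    (continuous_id.mul hg).intervalIntegrable b c
  have hpow (s : ℝ) (hs : s ∈ uIcc a t) : HasDerivAt (fun s => A / α * s ^ α) (s * g s) s := by
    rw [uIcc_of_le hat] at hs
    have hs0 : 0 < s := ha.trans_le hs.1
    refine ((Real.hasDerivAt_rpow_const (Or.inl hs0.ne')).const_mul (A / α)).congr_deriv ?_
    rw [htail s hs.1, show α - 1 = α - 2 + 1 by ring, Real.rpow_add_one hs0.ne']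
    field_simp
  calc quotientPrimitive g t
      = quotientPrimitive g a + ∫ s in a..t, s * g s :=
        (integral_add_adjacent_intervals (hint 0 a) (hint a t)).symm
    _ = A / α * t ^ α := by rw [hstart, integral_eq_sub_of_hasDerivAt hpow (hint a t)]; ring

end quotientPrimitive

/-- A decay profile of exponent `α` is the speed `-g'`, up to a constant factor, of a quotient `g`
for which `quotientPrimitive g` is a multiple of `t ^ α` on `[1, ∞)`. -/
structure IsDecayProfile (α : ℝ) (h : ℝ → ℝ) : Prop where
  contDiff : ContDiff ℝ ∞ h
  pos : ∀ s, 0 < s → 0 < h s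
  tail : ∀ s, 1 ≤ s → h s = s ^ (α - 3)
  moment : ∫ s in (0 : ℝ)..1, s ^ 2 * h s = 1 / α

/-- The decreasing quotient `∫ₜ^∞ h / ∫₀^∞ h` of a decay profile `h` of exponent `α`, written
without improper integrals: the tail of `h` contributes `∫₁^∞ s ^ (α - 3) ds = (2 - α)⁻¹`. -/
noncomputable def decayQuotient (α : ℝ) (h : ℝ → ℝ) (t : ℝ) : ℝ :=
  1 - (∫ s in (0 : ℝ)..t, h s) / ((2 - α)⁻¹ + ∫ s in (0 : ℝ)..1, h s)

theorem decayQuotient_zero (α : ℝ) (h : ℝ → ℝ) : decayQuotient α h 0 = 1 := by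
  simp [decayQuotient]

namespace IsDecayProfile

variable {α : ℝ} {h : ℝ → ℝ}

theorem intervalIntegrable (H : IsDecayProfile α h) (a b : ℝ) : IntervalIntegrable h volume a b :=
  H.contDiff.continuous.intervalIntegrable a b

theorem integral_pos (H : IsDecayProfile α h) : 0 < ∫ s in (0 : ℝ)..1, h s :=
  intervalIntegral_pos_of_pos_on (H.intervalIntegrable 0 1) (fun s hs => H.pos s hs.1) one_pos

theorem total_pos (H : IsDecayProfile α h) (hα : α < 2) :
    0 < (2 - α)⁻¹ + ∫ s in (0 : ℝ)..1, h s :=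
  add_pos (inv_pos.2 (sub_pos.2 hα)) H.integral_pos

theorem contDiff_decayQuotient (H : IsDecayProfile α h) : ContDiff ℝ ∞ (decayQuotient α h) :=
  contDiff_const.sub ((contDiff_intervalIntegral H.contDiff 0).div_const _)

theorem hasDerivAt_decayQuotient (H : IsDecayProfile α h) (t : ℝ) :
    HasDerivAt (decayQuotient α h) (-(h t / ((2 - α)⁻¹ + ∫ s in (0 : ℝ)..1, h s))) t :=
  ((H.contDiff.continuous.integral_hasStrictDerivAt 0 t).hasDerivAt.div_const _).const_sub 1

theorem strictAntiOn_decayQuotient (H : IsDecayProfile α h) (hα : α < 2) :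
    StrictAntiOn (decayQuotient α h) (Ici 0) := by
  refine strictAntiOn_of_deriv_neg (convex_Ici 0)
    H.contDiff_decayQuotient.continuous.continuousOn fun t ht => ?_
  rw [interior_Ici] at ht
  rw [(H.hasDerivAt_decayQuotient t).deriv]
  exact neg_neg_of_pos (div_pos (H.pos t ht) (H.total_pos hα))

theorem decayQuotient_one (H : IsDecayProfile α h) (hα : α < 2) :
    decayQuotient α h 1 = (2 - α)⁻¹ / ((2 - α)⁻¹ + ∫ s in (0 : ℝ)..1, h s) := by
  rw [decayQuotient, one_sub_div (H.total_pos hα).ne', add_sub_cancel_right]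

theorem decayQuotient_one_pos (H : IsDecayProfile α h) (hα : α < 2) : 0 < decayQuotient α h 1 := by
  rw [H.decayQuotient_one hα]
  exact div_pos (inv_pos.2 (sub_pos.2 hα)) (H.total_pos hα)

theorem decayQuotient_one_lt_one (H : IsDecayProfile α h) (hα : α < 2) :
    decayQuotient α h 1 < 1 :=
  sub_lt_self 1 (div_pos H.integral_pos (H.total_pos hα))

theorem one_sub_le_decayQuotient_one (H : IsDecayProfile α h) (hα : α < 2) :
    1 - (2 - α) * ∫ s in (0 : ℝ)..1, h s ≤ decayQuotient α h 1 := by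
  have : 0 < (2 - α)⁻¹ := inv_pos.2 (sub_pos.2 hα)
  have hint := H.integral_pos
  refine sub_le_sub_left ?_ 1
  calc (∫ s in (0 : ℝ)..1, h s) / ((2 - α)⁻¹ + ∫ s in (0 : ℝ)..1, h s)
      ≤ (∫ s in (0 : ℝ)..1, h s) / (2 - α)⁻¹ := by
        gcongr
        exact le_add_of_nonneg_right hint.le
    _ = (2 - α) * ∫ s in (0 : ℝ)..1, h s := by rw [div_inv_eq_mul, mul_comm]

theorem integral_tail (H : IsDecayProfile α h) (hα : α < 2) {t : ℝ} (ht : 1 ≤ t) :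
    ∫ s in (1 : ℝ)..t, h s = (2 - α)⁻¹ * (1 - t ^ (α - 2)) := by
  have h2α : α - 2 ≠ 0 := (sub_neg.2 hα).ne
  have h2α' : 2 - α ≠ 0 := (sub_pos.2 hα).ne'
  calc ∫ s in (1 : ℝ)..t, h s
      = ∫ s in (1 : ℝ)..t, s ^ (α - 3) :=
        integral_congr fun s hs => H.tail s (uIcc_of_le ht ▸ hs).1
    _ = (t ^ (α - 3 + 1) - 1 ^ (α - 3 + 1)) / (α - 3 + 1) :=
        integral_rpow (Or.inr ⟨by contrapose! h2α; linarith,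
          notMem_uIcc_of_lt one_pos (one_pos.trans_le ht)⟩)
    _ = (2 - α)⁻¹ * (1 - t ^ (α - 2)) := by
        rw [show α - 3 + 1 = α - 2 by ring, Real.one_rpow]
        field_simp
        ring

theorem decayQuotient_of_one_le (H : IsDecayProfile α h) (hα : α < 2) {t : ℝ} (ht : 1 ≤ t) :
    decayQuotient α h t = decayQuotient α h 1 * t ^ (α - 2) := by
  have htotal := H.total_pos hα
  rw [H.decayQuotient_one hα, decayQuotient,
    ← integral_add_adjacent_intervals (H.intervalIntegrable 0 1) (H.intervalIntegrable 1 t),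
    H.integral_tail hα ht, one_sub_div htotal.ne']
  ring

theorem decayQuotient_pos (H : IsDecayProfile α h) (hα : α < 2) {t : ℝ} (ht : 0 ≤ t) :
    0 < decayQuotient α h t := by
  have hmax : 0 < decayQuotient α h (max t 1) := by
    rw [H.decayQuotient_of_one_le hα (le_max_right t 1)]
    exact mul_pos (H.decayQuotient_one_pos hα) (Real.rpow_pos_of_pos (by positivity) _)
  exact hmax.trans_le <| (H.strictAntiOn_decayQuotient hα).antitoneOn ht
    (ht.trans (le_max_left t 1)) (le_max_left t 1)

theorem tendsto_decayQuotient_atTop (H : IsDecayProfile α h) (hα : α < 2) :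
    Tendsto (decayQuotient α h) atTop (𝓝 0) := by
  have hpow : Tendsto (fun t : ℝ => decayQuotient α h 1 * t ^ (-(2 - α))) atTop (𝓝 0) := by
    simpa only [mul_zero] using
      (tendsto_rpow_neg_atTop (sub_pos.2 hα)).const_mul (decayQuotient α h 1)
  refine hpow.congr' ?_
  filter_upwards [eventually_ge_atTop 1] with t ht
  rw [H.decayQuotient_of_one_le hα ht, neg_sub]

theorem quotientPrimitive_one (H : IsDecayProfile α h) (hα₀ : α ≠ 0) (hα : α < 2) :
    quotientPrimitive (decayQuotient α h) 1 = decayQuotient α h 1 / α := by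
  have htotal := (H.total_pos hα).ne'
  have h2α : 2 - α ≠ 0 := (sub_pos.2 hα).ne'
  set S := (2 - α)⁻¹ + ∫ s in (0 : ℝ)..1, h s with hS
  have hsq (s : ℝ) : HasDerivAt (fun s : ℝ => s ^ 2 / 2) s s := by
    simpa using (hasDerivAt_pow 2 s).div_const 2
  have hparts := integral_mul_deriv_eq_deriv_mul (a := 0) (b := 1)
    (fun s _ => H.hasDerivAt_decayQuotient s) (fun s _ => hsq s)
    ((H.contDiff.continuous.div_const _).neg.intervalIntegrable _ _)
    (continuous_id.intervalIntegrable _ _)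
  have hmoment : ∫ s in (0 : ℝ)..1, -(h s / S) * (s ^ 2 / 2) = -(1 / (2 * S)) * (1 / α) := by
    rw [← H.moment, ← intervalIntegral.integral_const_mul]
    congr 1 with s
    field_simp
  calc quotientPrimitive (decayQuotient α h) 1
      = ∫ s in (0 : ℝ)..1, decayQuotient α h s * s := by simp only [quotientPrimitive, mul_comm]
    _ = decayQuotient α h 1 / 2 + 1 / (2 * S) * (1 / α) := by rw [hparts, hmoment]; ring
    _ = decayQuotient α h 1 / α := by
        rw [H.decayQuotient_one hα, ← hS]
        field_simp
        ring

theorem quotientPrimitive_eq_rpow (H : IsDecayProfile α h) (hα₀ : α ≠ 0) (hα : α < 2) {t : ℝ}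
    (ht : 1 ≤ t) :
    quotientPrimitive (decayQuotient α h) t = decayQuotient α h 1 / α * t ^ α :=
  quotientPrimitive.eq_rpow_of_le H.contDiff_decayQuotient.continuous hα₀ one_pos
    (fun _ hs => H.decayQuotient_of_one_le hα hs)
    (by rw [H.quotientPrimitive_one hα₀ hα, Real.one_rpow, mul_one]) ht

end IsDecayProfile

/-- A smooth cutoff, equal to `1` on `(-∞, 1/2]` and to `0` on `[1, ∞)`. -/
noncomputable def innerCutoff (s : ℝ) : ℝ := Real.smoothTransition (2 - 2 * s)

namespace innerCutoff

theorem contDiff : ContDiff ℝ ∞ innerCutoff :=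
  Real.smoothTransition.contDiff.comp (contDiff_const.sub (contDiff_const.mul contDiff_id))

@[fun_prop]
theorem continuous : Continuous innerCutoff := contDiff.continuous

theorem eq_one_of_le_half {s : ℝ} (hs : s ≤ 1 / 2) : innerCutoff s = 1 :=
  Real.smoothTransition.one_of_one_le (by linarith)

theorem eq_zero_of_one_le {s : ℝ} (hs : 1 ≤ s) : innerCutoff s = 0 :=
  Real.smoothTransition.zero_of_nonpos (by linarith)

theorem nonneg (s : ℝ) : 0 ≤ innerCutoff s := Real.smoothTransition.nonneg _

theorem le_one (s : ℝ) : innerCutoff s ≤ 1 := Real.smoothTransition.le_one _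

theorem pos_of_lt_one {s : ℝ} (hs : s < 1) : 0 < innerCutoff s :=
  Real.smoothTransition.pos_of_pos (by linarith)

theorem lt_one_of_half_lt {s : ℝ} (hs : 1 / 2 < s) : innerCutoff s < 1 :=
  Real.smoothTransition.lt_one_of_lt_one (by linarith)

theorem moment_pos {β : ℝ} (hβ : 0 ≤ β) : 0 < ∫ s in (0 : ℝ)..1, s ^ β * innerCutoff s :=
  intervalIntegral_pos_of_pos_on
    (((Real.continuous_rpow_const hβ).mul continuous).intervalIntegrable _ _)
    (fun _ hs => mul_pos (Real.rpow_pos_of_pos hs.1 β) (pos_of_lt_one hs.2)) one_pos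

theorem moment_le_one {β : ℝ} (hβ : 0 ≤ β) :
    ∫ s in (0 : ℝ)..1, s ^ β * innerCutoff s ≤ 1 := by
  have hpointwise (s : ℝ) (hs : s ∈ Icc (0 : ℝ) 1) : s ^ β * innerCutoff s ≤ 1 :=
    mul_le_one₀ (Real.rpow_le_one hs.1 hs.2 hβ) (nonneg s) (le_one s)
  simpa using integral_mono_on (μ := volume) zero_le_one
    (((Real.continuous_rpow_const hβ).mul continuous).intervalIntegrable _ _)
    intervalIntegrable_const hpointwise

end innerCutoff

/-- The constant value taken near `0` by `decayProfile α`; it is the value for which the second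
moment over `[0, 1]` is the one required by `IsDecayProfile`. -/
noncomputable def decayLevel (α : ℝ) : ℝ :=
  (∫ s in (0 : ℝ)..1, s ^ (α - 1) * innerCutoff s) /
    ∫ s in (0 : ℝ)..1, s ^ (2 : ℝ) * innerCutoff s

/-- A decay profile of exponent `α`, interpolating between a constant near `0` and the power
`s ^ (α - 3)` on `[1, ∞)`. -/
noncomputable def decayProfile (α s : ℝ) : ℝ :=
  (1 - innerCutoff s) * s ^ (α - 3) + decayLevel α * innerCutoff s

section DecayProfile

variable {α : ℝ}

theorem decayLevel_pos (hα : 1 ≤ α) : 0 < decayLevel α :=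
  div_pos (innerCutoff.moment_pos (sub_nonneg.2 hα)) (innerCutoff.moment_pos zero_le_two)

theorem decayLevel_le (hα : 1 ≤ α) :
    decayLevel α ≤ 1 / ∫ s in (0 : ℝ)..1, s ^ (2 : ℝ) * innerCutoff s :=
  div_le_div_of_nonneg_right (innerCutoff.moment_le_one (sub_nonneg.2 hα))
    (innerCutoff.moment_pos zero_le_two).le

theorem contDiff_decayProfile : ContDiff ℝ ∞ (decayProfile α) := by
  refine ContDiff.add ?_ (contDiff_const.mul innerCutoff.contDiff)
  refine contDiff_iff_contDiffAt.2 fun s => ?_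
  rcases lt_or_ge s (1 / 2) with hs | hs
  · refine contDiffAt_const (c := (0 : ℝ)) |>.congr_of_eventuallyEq ?_
    filter_upwards [Iio_mem_nhds hs] with x hx
    rw [innerCutoff.eq_one_of_le_half (le_of_lt hx), sub_self, zero_mul]
  · exact (contDiff_const.sub innerCutoff.contDiff).contDiffAt.mul
      (Real.contDiffAt_rpow_const_of_ne (by linarith))

theorem decayProfile_of_le_half {s : ℝ} (hs : s ≤ 1 / 2) : decayProfile α s = decayLevel α := by
  simp [decayProfile, innerCutoff.eq_one_of_le_half hs]

theorem decayProfile_pos (hα : 1 ≤ α) {s : ℝ} (hs : 0 < s) : 0 < decayProfile α s := by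
  rcases le_or_gt s (1 / 2) with hs' | hs'
  · rw [decayProfile_of_le_half hs']
    exact decayLevel_pos hα
  · exact add_pos_of_pos_of_nonneg
      (mul_pos (sub_pos.2 (innerCutoff.lt_one_of_half_lt hs')) (Real.rpow_pos_of_pos hs _))
      (mul_nonneg (decayLevel_pos hα).le (innerCutoff.nonneg s))

theorem decayProfile_moment (hα : 1 ≤ α) :
    ∫ s in (0 : ℝ)..1, s ^ 2 * decayProfile α s = 1 / α := by
  have hcont : Continuous fun s : ℝ => s ^ (α - 1) := Real.continuous_rpow_const (by linarith)
  have hcont2 : Continuous fun s : ℝ => s ^ (2 : ℝ) := Real.continuous_rpow_const zero_le_two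
  have hJ := (innerCutoff.moment_pos zero_le_two).ne'
  calc ∫ s in (0 : ℝ)..1, s ^ 2 * decayProfile α s
      = ∫ s in (0 : ℝ)..1, s ^ (α - 1) - s ^ (α - 1) * innerCutoff s
          + decayLevel α * (s ^ (2 : ℝ) * innerCutoff s) := by
        refine integral_congr_Ioo_of_le zero_le_one fun s hs => ?_
        have hpow : s ^ (α - 1) = s ^ 2 * s ^ (α - 3) := by
          rw [← Real.rpow_two, ← Real.rpow_add hs.1]
          ring_nf
        simp only [decayProfile, hpow, Real.rpow_two]
        ring
    _ = (∫ s in (0 : ℝ)..1, s ^ (α - 1)) - (∫ s in (0 : ℝ)..1, s ^ (α - 1) * innerCutoff s)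
          + decayLevel α * ∫ s in (0 : ℝ)..1, s ^ (2 : ℝ) * innerCutoff s := by
        rw [intervalIntegral.integral_add, intervalIntegral.integral_sub,
          intervalIntegral.integral_const_mul]
        all_goals exact Continuous.intervalIntegrable (by fun_prop) _ _
    _ = ∫ s in (0 : ℝ)..1, s ^ (α - 1) := by
        rw [decayLevel, div_mul_cancel₀ _ hJ, sub_add_cancel]
    _ = 1 / α := by
        rw [integral_rpow (Or.inl (by linarith)), sub_add_cancel, Real.one_rpow,
          Real.zero_rpow (by linarith), sub_zero]

theorem isDecayProfile_decayProfile (hα : 1 ≤ α) : IsDecayProfile α (decayProfile α) where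
  contDiff := contDiff_decayProfile
  pos _ hs := decayProfile_pos hα hs
  tail s hs := by simp [decayProfile, innerCutoff.eq_zero_of_one_le hs]
  moment := decayProfile_moment hα

/-- Beyond the constant part `[0, 1/2]` one has `1 ≤ 4 s ^ 2`, so the moment condition controls the
integral uniformly in the exponent. -/
theorem integral_decayProfile_le (hα : 1 ≤ α) :
    ∫ s in (0 : ℝ)..1, decayProfile α s ≤ 4 + decayLevel α := by
  have hcont : Continuous (decayProfile α) := contDiff_decayProfile.continuous
  have hpointwise (s : ℝ) : decayProfile α s ≤ 4 * (s ^ 2 * decayProfile α s) + decayLevel α := by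
    have hlevel := decayLevel_pos hα
    rcases le_or_gt s (1 / 2) with hs' | hs'
    · rw [decayProfile_of_le_half hs']
      exact le_add_of_nonneg_left (by positivity)
    · have hprofile := decayProfile_pos hα (show 0 < s by linarith)
      have hsq : 1 ≤ 4 * s ^ 2 := by nlinarith
      nlinarith
  calc ∫ s in (0 : ℝ)..1, decayProfile α s
      ≤ ∫ s in (0 : ℝ)..1, 4 * (s ^ 2 * decayProfile α s) + decayLevel α :=
        intervalIntegral.integral_mono zero_le_one (hcont.intervalIntegrable _ _)
          (Continuous.intervalIntegrable (by fun_prop) _ _) hpointwise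
    _ = 4 * (1 / α) + decayLevel α := by
        rw [intervalIntegral.integral_add, intervalIntegral.integral_const_mul,
          decayProfile_moment hα]
        · simp
        all_goals exact Continuous.intervalIntegrable (by fun_prop) _ _
    _ ≤ 4 + decayLevel α := by
        have : 1 / α ≤ 1 := div_le_one_of_le₀ hα (by linarith)
        linarith

end DecayProfile

theorem eventually_lt_decayQuotient_one {η : ℝ} (hη : η < 1) :
    ∀ᶠ α in 𝓝[<] (2 : ℝ), η < decayQuotient α (decayProfile α) 1 := by
  set M := 4 + 1 / ∫ s in (0 : ℝ)..1, s ^ (2 : ℝ) * innerCutoff s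
  have hlim : Tendsto (fun α => 1 - (2 - α) * M) (𝓝[<] 2) (𝓝 1) := by
    have hcont : Continuous fun α : ℝ => 1 - (2 - α) * M := by fun_prop
    simpa using (hcont.tendsto 2).mono_left nhdsWithin_le_nhds
  filter_upwards [hlim.eventually_const_lt hη, Ioo_mem_nhdsLT one_lt_two] with α hηα hα
  have hM : ∫ s in (0 : ℝ)..1, decayProfile α s ≤ M :=
    (integral_decayProfile_le hα.1.le).trans (add_le_add le_rfl (decayLevel_le hα.1.le))
  calc η < 1 - (2 - α) * M := hηα
    _ ≤ 1 - (2 - α) * ∫ s in (0 : ℝ)..1, decayProfile α s := by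
        have h2α := sub_pos.2 hα.2
        gcongr
    _ ≤ decayQuotient α (decayProfile α) 1 :=
        (isDecayProfile_decayProfile hα.1.le).one_sub_le_decayQuotient_one hα.2

theorem auxiliary_function_exists_general {η : ℝ} (hη : η < 1) :
    ∀ᶠ α in 𝓝[<] (2 : ℝ), ∃ (φ : ℝ → ℝ) (c : ℝ),
      ContDiff ℝ ∞ φ ∧ c ∈ Ioo (0 : ℝ) 1 ∧
      φ 0 = 0 ∧ deriv φ 0 = 0 ∧ deriv (deriv φ) 0 = 1 ∧
      Tendsto (fun t => deriv φ t / t) (𝓝[>] 0) (𝓝 1) ∧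
      (∀ t, 0 < t → 0 < φ t) ∧
      (∀ t, 0 < t → 0 < deriv φ t) ∧
      StrictAntiOn (fun t => deriv φ t / t) (Ioi 0) ∧
      Tendsto (fun t => deriv φ t / t) atTop (𝓝 0) ∧
      ∀ t, 0 < t → deriv φ t / t ≤ η → φ t = c * t ^ α := by
  filter_upwards [eventually_lt_decayQuotient_one hη, Ioo_mem_nhdsLT one_lt_two] with α hηα hα
  have H := isDecayProfile_decayProfile hα.1.le
  have hα₀ : 0 < α := one_pos.trans hα.1
  set g := decayQuotient α (decayProfile α)
  have hg : Continuous g := H.contDiff_decayQuotient.continuous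
  have hg₀ : g 0 = 1 := decayQuotient_zero α _
  have hpos (t : ℝ) (ht : 0 < t) : 0 < g t := H.decayQuotient_pos hα.2 ht.le
  have hanti : StrictAntiOn g (Ici 0) := H.strictAntiOn_decayQuotient hα.2
  have hquot : EqOn g (fun t => deriv (quotientPrimitive g) t / t) (Ioi 0) :=
    fun _ ht => (quotientPrimitive.deriv_div_eq hg (ne_of_gt ht)).symm
  refine ⟨quotientPrimitive g, g 1 / α, quotientPrimitive.contDiff H.contDiff_decayQuotient,
    ⟨div_pos (hpos 1 one_pos) hα₀, ?_⟩, quotientPrimitive.apply_zero, ?_, ?_, ?_,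
    fun t => quotientPrimitive.pos hg hpos, fun t ht => ?_,
    (hanti.mono Ioi_subset_Ici_self).congr hquot, ?_, fun t ht hle => ?_⟩
  · exact (div_lt_one hα₀).2 ((H.decayQuotient_one_lt_one hα.2).trans hα.1)
  · simp [quotientPrimitive.deriv_eq hg]
  · rw [quotientPrimitive.deriv_deriv_zero hg, hg₀]
  · have hlim : Tendsto g (𝓝[>] 0) (𝓝 (g 0)) := hg.continuousWithinAt
    rw [hg₀] at hlim
    exact hlim.congr' (hquot.eventuallyEq_of_mem self_mem_nhdsWithin)
  · rw [quotientPrimitive.deriv_eq hg]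
    exact mul_pos ht (hpos t ht)
  · exact (H.tendsto_decayQuotient_atTop hα.2).congr'
      (hquot.eventuallyEq_of_mem (Ioi_mem_atTop 0))
  · have hlt : g t < g 1 := ((hquot ht).le.trans hle).trans_lt hηα
    exact H.quotientPrimitive_eq_rpow hα₀.ne' hα.2
      ((hanti.lt_iff_gt (mem_Ici.2 ht.le) (mem_Ici.2 zero_le_one)).1 hlt).le

/-- Lemma 2.2: existence of the auxiliary function `φ` used to construct the
modified Hamiltonians. -/
theorem auxiliary_function_exists :
    ∃ θ₀ : ℝ, θ₀ ∈ Set.Ioo (0:ℝ) 1 ∧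
      ∀ θ : ℝ, θ ∈ Set.Ioo (0:ℝ) θ₀ →
        ∃ (φ : ℝ → ℝ) (α c : ℝ),
          ContDiff ℝ (⊤ : ℕ∞) φ ∧ α ∈ Set.Ioo (1:ℝ) 2 ∧ c ∈ Set.Ioo (0:ℝ) 1 ∧
          -- (i)
          φ 0 = 0 ∧ deriv φ 0 = 0 ∧ deriv (deriv φ) 0 = 1 ∧
          Tendsto (fun t => deriv φ t / t) (𝓝[>] (0:ℝ)) (𝓝 1) ∧
          -- (ii)
          (∀ t : ℝ, 0 < t → 0 < φ t) ∧
          (∀ t : ℝ, 0 < t → 0 < deriv φ t) ∧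
          StrictAntiOn (fun t => deriv φ t / t) (Set.Ioi (0:ℝ)) ∧
          (∃ L : ℝ, L < θ ∧ Tendsto (fun t => deriv φ t / t) atTop (𝓝 L)) ∧
          -- (iii)
          (∀ t : ℝ, 0 < t → θ ≤ deriv φ t / t → deriv φ t / t ≤ 1 - θ →
            φ t = c * t ^ α) := by
  refine ⟨1 / 2, by norm_num, fun θ hθ => ?_⟩
  have hη : 1 - θ < 1 := sub_lt_self 1 hθ.1
  obtain ⟨α, ⟨φ, c, hsmooth, hc, hφ, hφ', hφ'', hlim, hpos, hpos', hanti, hinf, hpow⟩, hα⟩ :=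
    ((auxiliary_function_exists_general hη).and (Ioo_mem_nhdsLT one_lt_two)).exists
  exact ⟨φ, α, c, hsmooth, hα, hc, hφ, hφ', hφ'', hlim, hpos, hpos', hanti, ⟨0, hθ.1, hinf⟩,
    fun t ht _ => hpow t ht⟩
end

section
/- Let X be a real Hilbert space with inner product ⟨·,·⟩ and norm ‖·‖, with orthogonal decomposition X = H⁺ ⊕ H⁻ where H⁻ is a finite-dimensional subspace, and let F: X → ℝ be Fréchet C^1 and satisfy the concavity condition: there is C > 0 such that ⟨F′(x + h) − F′(x), h⟩ ≤ −C‖h‖² for all x ∈ X and all h ∈ H⁻. Let x̄ be a critical point of F. Then there exist r > 0, a continuous map h: {ν ∈ H⁺ : ‖ν‖ < r} → H⁻ with h(0) = 0, and a homeomorphism φ from the open ball B(0, r) ⊆ X onto an open neighborhood of x̄ in X with φ(0) = x̄, such that for every ξ ∈ B(0, r), writing ξ = ν + η with ν ∈ H⁺ and η ∈ H⁻, one has F(φ(ξ)) = −‖η‖² + F(x̄ + ν + h(ν)). Moreover, if a finite group Γ acts on X by linear isometries which leave H⁺ and H⁻ invariant, fix x̄, and satisfy F(γ·x) = F(x) for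 all γ ∈ Γ and x ∈ X, then h and φ can be chosen Γ-equivariant. -/
/-!
Each fibre function `η ↦ F (x̄ + ν + η)` is strongly concave on `H⁻`, so it has exactly one maximum
point `h ν`. It moves continuously with `ν`, since the derivative of the fibre function at a point
controls the distance from that point to the maximum. The gap between the maximum and the value at
`h ν + w` is strictly increasing along every ray of `w` and grows at least quadratically, hence
stretching each ray suitably turns the gap into `‖η‖ ^ 2`, by a homeomorphism depending
continuously on `ν`. No choice is made in this construction, so it commutes with every symmetry of
`F`, and it is global, so that any radius will do.
-/

open Set Filter Topology Function

section StrongConcavity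

variable {E : Type*} [NormedAddCommGroup E] [NormedSpace ℝ E] {C : ℝ} {f : E → ℝ}

/-- The derivative of `f` is strongly antitone with constant `C`: the first-order form of strong
concavity, with the base point `x` and the increment `h` as variables. -/
def StronglyAntitoneFDeriv (C : ℝ) (f : E → ℝ) : Prop :=
  ∀ x h : E, fderiv ℝ f (x + h) h - fderiv ℝ f x h ≤ -C * ‖h‖ ^ 2

namespace StronglyAntitoneFDeriv

lemma le_add_fderiv_sub_sq (hf : StronglyAntitoneFDeriv C f) (hd : Differentiable ℝ f) (x h : E) :
    f (x + h) ≤ f x + fderiv ℝ f x h - C / 2 * ‖h‖ ^ 2 := by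
  let k : ℝ → ℝ := fun s ↦ f (x + s • h) - s * fderiv ℝ f x h + C / 2 * ‖h‖ ^ 2 * s ^ 2
  have hk (s : ℝ) : HasDerivAt k
      (fderiv ℝ f (x + s • h) h - fderiv ℝ f x h + C * ‖h‖ ^ 2 * s) s := by
    have hline : HasDerivAt (fun s : ℝ ↦ x + s • h) h s := by
      simpa using ((hasDerivAt_id s).smul_const h).const_add x
    have hfline := (hd (x + s • h)).hasFDerivAt.comp_hasDerivAt s hline
    refine ((hfline.sub ((hasDerivAt_id s).mul_const (fderiv ℝ f x h))).add
      ((hasDerivAt_pow 2 s).const_mul (C / 2 * ‖h‖ ^ 2))).congr_deriv ?_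
    push_cast
    ring
  have hk_nonpos : ∀ s ∈ interior (Ici (0 : ℝ)), deriv k s ≤ 0 := by
    intro s hs
    rw [interior_Ici, mem_Ioi] at hs
    have hinc := hf x (s • h)
    simp only [map_smul, smul_eq_mul, norm_smul, Real.norm_eq_abs, mul_pow, sq_abs] at hinc
    rw [(hk s).deriv]
    refine nonpos_of_mul_nonpos_right ?_ hs
    linarith
  have hanti : AntitoneOn k (Ici 0) :=
    antitoneOn_of_deriv_nonpos (convex_Ici 0) (fun s _ ↦ (hk s).continuousAt.continuousWithinAt)
      (fun s _ ↦ (hk s).differentiableAt.differentiableWithinAt) hk_nonpos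
  have hle := hanti self_mem_Ici (mem_Ici.2 zero_le_one) zero_le_one
  simp only [k, one_smul, zero_smul, add_zero] at hle
  linarith

lemma strongConcaveOn_univ (hf : StronglyAntitoneFDeriv C f) (hd : Differentiable ℝ f) :
    StrongConcaveOn univ C f := by
  refine ⟨convex_univ, fun x _ y _ a b ha hb hab ↦ ?_⟩
  obtain rfl : b = 1 - a := by linarith
  set z := a • x + (1 - a) • y with hz
  have hx := hf.le_add_fderiv_sub_sq hd z ((1 - a) • (x - y))
  have hy := hf.le_add_fderiv_sub_sq hd z (-a • (x - y))
  rw [show z + (1 - a) • (x - y) = x by rw [hz]; module] at hx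
  rw [show z + -a • (x - y) = y by rw [hz]; module] at hy
  simp only [map_smul, smul_eq_mul, norm_smul, Real.norm_eq_abs, mul_pow, sq_abs] at hx hy ⊢
  have hax := mul_le_mul_of_nonneg_left hx ha
  have hby := mul_le_mul_of_nonneg_left hy hb
  linarith

lemma isMaxOn_univ_of_fderiv_eq_zero (hf : StronglyAntitoneFDeriv C f) (hC : 0 ≤ C)
    (hd : Differentiable ℝ f) {a : E} (ha : fderiv ℝ f a = 0) : IsMaxOn f univ a := by
  intro x _
  have hle := hf.le_add_fderiv_sub_sq hd a (x - a)
  rw [add_sub_cancel, ha, zero_apply] at hle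
  have : 0 ≤ C / 2 * ‖x - a‖ ^ 2 := by positivity
  change f x ≤ f a
  linarith

lemma bddAbove_range (hf : StronglyAntitoneFDeriv C f) (hC : 0 < C) (hd : Differentiable ℝ f) :
    BddAbove (range f) := by
  refine ⟨f 0 + ‖fderiv ℝ f 0‖ ^ 2 / (2 * C), forall_mem_range.2 fun x ↦ ?_⟩
  have hle := hf.le_add_fderiv_sub_sq hd 0 x
  rw [zero_add] at hle
  have hop := (le_abs_self _).trans ((fderiv ℝ f 0).le_opNorm x)
  have hsq : ‖fderiv ℝ f 0‖ * ‖x‖ - C / 2 * ‖x‖ ^ 2 ≤ ‖fderiv ℝ f 0‖ ^ 2 / (2 * C) := by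
    rw [le_div_iff₀ (by positivity)]
    linarith [sq_nonneg (‖fderiv ℝ f 0‖ - C * ‖x‖)]
  linarith

end StronglyAntitoneFDeriv

/-- A maximizing sequence is Cauchy, because strong concavity bounds the distance of two points
by the defect of `f` at their midpoint. -/
lemma exists_isMaxOn_of_strongConcaveOn [CompleteSpace E] (hC : 0 < C)
    (hconc : StrongConcaveOn univ C f) (hf : Continuous f) (hbdd : BddAbove (range f)) :
    ∃ a, IsMaxOn f univ a := by
  obtain ⟨v, hv_mono, hv, hv_mem⟩ := exists_seq_tendsto_sSup (range_nonempty f) hbdd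
  choose u hu using hv_mem
  set S := sSup (range f)
  have hle (x : E) : f x ≤ S := le_csSup hbdd (mem_range_self x)
  have hmid (x y : E) : C / 4 * ‖x - y‖ ^ 2 ≤ 2 * S - (f x + f y) := by
    have h := hconc.2 (mem_univ x) (mem_univ y) one_half_pos.le one_half_pos.le (add_halves 1)
    simp only [smul_eq_mul] at h
    linarith [hle ((1 / 2 : ℝ) • x + (1 / 2 : ℝ) • y)]
  have hcauchy : CauchySeq u := by
    refine cauchySeq_of_le_tendsto_0 (fun N ↦ √(8 / C * (S - v N))) (fun n m N hn hm ↦ ?_) ?_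
    · rw [dist_eq_norm]
      refine Real.le_sqrt_of_sq_le ?_
      rw [div_mul_eq_mul_div, le_div_iff₀ hC]
      have h := hmid (u n) (u m)
      rw [hu, hu] at h
      linarith [hv_mono hn, hv_mono hm]
    · simpa using ((hv.const_sub S).const_mul (8 / C)).sqrt
  obtain ⟨a, ha⟩ := cauchySeq_tendsto_of_complete hcauchy
  have hfa : f a = S := by
    refine tendsto_nhds_unique ((hf.tendsto a).comp ha) ?_
    simpa only [comp_def, hu] using hv
  exact ⟨a, fun x _ ↦ (hle x).trans_eq hfa.symm⟩

lemma strictAntiOn_ray_of_isMaxOn (hf : StrictConcaveOn ℝ univ f) {a w : E}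
    (ha : IsMaxOn f univ a) (hw : w ≠ 0) :
    StrictAntiOn (fun t : ℝ ↦ f (a + t • w)) (Ici 0) := by
  have hconc : ConcaveOn ℝ univ (fun t : ℝ ↦ f (a + t • w)) := by
    have h := hf.concaveOn.comp_affineMap (AffineMap.lineMap a (a + w))
    simpa [comp_def, AffineMap.lineMap_apply, add_comm] using h
  have hlt {t : ℝ} (ht : 0 < t) : f (a + t • w) < f (a + (0 : ℝ) • w) := by
    rw [zero_smul, add_zero]
    refine lt_of_le_of_ne (ha (mem_univ _)) fun heq ↦ ?_
    have hmax : IsMaxOn f univ (a + t • w) := fun x hx ↦ (ha hx).trans_eq heq.symm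
    have h := hf.eq_of_isMaxOn hmax ha (mem_univ _) (mem_univ _)
    simp [ht.ne', hw] at h
  intro s hs t _ hst
  rcases (mem_Ici.1 hs).eq_or_lt with rfl | hs
  · exact hlt hst
  · exact hconc.strictAntiOn (mem_univ 0) hs (hlt hs) ⟨mem_univ s, self_mem_Ici⟩
      ⟨mem_univ t, hst.le⟩ hst

end StrongConcavity

section RadialFamily

variable {Y E : Type*} [TopologicalSpace Y] [NormedAddCommGroup E] [NormedSpace ℝ E]

/-- The map of `E` along rays that turns `f` into the square of the norm. At `w = 0` the quotient
is `0` by the convention for division by zero, so that `0` is fixed. -/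
noncomputable def radialRescale (f : E → ℝ) (w : E) : E := (√(f w) / ‖w‖) • w

lemma norm_radialRescale {f : E → ℝ} (hf : f 0 = 0) (w : E) : ‖radialRescale f w‖ = √(f w) := by
  rcases eq_or_ne w 0 with rfl | hw
  · simp [radialRescale, hf]
  · rw [radialRescale, norm_smul, norm_div, norm_norm, Real.norm_of_nonneg (Real.sqrt_nonneg _),
      div_mul_cancel₀ _ (norm_ne_zero_iff.2 hw)]

lemma radialRescale_map (b : E ≃ₗᵢ[ℝ] E) {f f' : E → ℝ} (hf : ∀ w, f' (b w) = f w) (w : E) :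
    radialRescale f' (b w) = b (radialRescale f w) := by
  simp only [radialRescale, hf, b.norm_map, map_smul]

lemma continuousAt_of_strictMonoOn {Z : Type*} [TopologicalSpace Z] {k : Z → ℝ → ℝ} {r τ : Z → ℝ}
    {z₀ : Z} (hk : ∀ t, ContinuousAt (fun z ↦ k z t) z₀) (hr : ContinuousAt r z₀)
    (hmono : ∀ᶠ z in 𝓝 z₀, StrictMonoOn (k z) (Ici 0)) (hτ : ∀ z, 0 ≤ τ z)
    (hkτ : ∀ z, k z (τ z) = r z) : ContinuousAt τ z₀ := by
  refine tendsto_order.2 ⟨fun a ha ↦ ?_, fun b hb ↦ ?_⟩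
  · rcases lt_or_ge a 0 with ha₀ | ha₀
    · exact Eventually.of_forall fun z ↦ ha₀.trans_le (hτ z)
    · have hlt : k z₀ a < r z₀ := hkτ z₀ ▸ hmono.self_of_nhds ha₀ (hτ z₀) ha
      filter_upwards [hmono, (hk a).eventually_lt hr hlt] with z hz hza
      rwa [← hkτ, hz.lt_iff_lt ha₀ (hτ z)] at hza
  · have hb₀ : 0 ≤ b := (hτ z₀).trans hb.le
    have hlt : r z₀ < k z₀ b := hkτ z₀ ▸ hmono.self_of_nhds (hτ z₀) hb₀ hb
    filter_upwards [hmono, hr.eventually_lt (hk b) hlt] with z hz hzb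
    rwa [← hkτ, hz.lt_iff_lt (hτ z) hb₀] at hzb

/-- A continuous family of functions `g y` on `E`, vanishing at the origin, strictly increasing
along rays, and growing at least like `c ‖w‖ ^ 2`. -/
structure RadialFamily (c : ℝ) (g : Y → E → ℝ) : Prop where
  pos : 0 < c
  continuous : Continuous (uncurry g)
  map_zero : ∀ y, g y 0 = 0
  strictMonoOn : ∀ y {w}, w ≠ 0 → StrictMonoOn (fun t : ℝ ↦ g y (t • w)) (Ici 0)
  mul_sq_norm_le : ∀ y w, c * ‖w‖ ^ 2 ≤ g y w

namespace RadialFamily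

variable {c : ℝ} {g : Y → E → ℝ} (hg : RadialFamily c g)

include hg

lemma nonneg (y : Y) (w : E) : 0 ≤ g y w :=
  (mul_nonneg hg.pos.le (sq_nonneg _)).trans (hg.mul_sq_norm_le y w)

lemma sq_norm_radialRescale (y : Y) (w : E) : ‖radialRescale (g y) w‖ ^ 2 = g y w := by
  rw [norm_radialRescale (hg.map_zero y), Real.sq_sqrt (hg.nonneg y w)]

lemma continuous_radialRescale : Continuous fun p : Y × E ↦ radialRescale (g p.1) p.2 := by
  have hsqrt : Continuous fun p : Y × E ↦ √(g p.1 p.2) := hg.continuous.sqrt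
  refine continuous_iff_continuousAt.2 fun p ↦ ?_
  rcases eq_or_ne p.2 0 with hp | hp
  · have hrescale : radialRescale (g p.1) p.2 = 0 := by rw [hp, radialRescale, smul_zero]
    rw [ContinuousAt, hrescale, tendsto_zero_iff_norm_tendsto_zero]
    simp only [norm_radialRescale (hg.map_zero _)]
    simpa [hp, hg.map_zero] using hsqrt.tendsto p
  · have hfactor := hsqrt.continuousAt.div continuousAt_snd.norm (norm_ne_zero_iff.2 hp)
    exact hfactor.smul continuousAt_snd

lemma continuous_smul (t : ℝ) : Continuous fun p : Y × E ↦ g p.1 (t • p.2) :=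
  hg.continuous.comp (by fun_prop : Continuous fun p : Y × E ↦ (p.1, t • p.2))

lemma exists_smul_eq_sq_norm (y : Y) (v : E) : ∃ t : ℝ, 0 ≤ t ∧ g y (t • v) = ‖v‖ ^ 2 := by
  have hcont : Continuous fun t : ℝ ↦ g y (t • v) :=
    hg.continuous.comp (by fun_prop : Continuous fun t : ℝ ↦ (y, t • v))
  have hlower : g y ((0 : ℝ) • v) ≤ ‖v‖ ^ 2 := by
    rw [zero_smul, hg.map_zero]
    positivity
  have hupper : ‖v‖ ^ 2 ≤ g y (√(1 / c) • v) := by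
    have hc := hg.pos
    refine le_of_eq_of_le ?_ (hg.mul_sq_norm_le y _)
    rw [norm_smul, mul_pow, Real.norm_eq_abs, sq_abs, Real.sq_sqrt (by positivity)]
    field_simp
  obtain ⟨t, ht, heq⟩ :=
    intermediate_value_Icc (Real.sqrt_nonneg (1 / c)) hcont.continuousOn ⟨hlower, hupper⟩
  exact ⟨t, ht.1, heq⟩

/-- The factor `t ≥ 0` by which `v` has to be stretched so that `g y (t • v) = ‖v‖ ^ 2`. -/
noncomputable def stretch (y : Y) (v : E) : ℝ := (hg.exists_smul_eq_sq_norm y v).choose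

lemma stretch_nonneg (y : Y) (v : E) : 0 ≤ hg.stretch y v :=
  (hg.exists_smul_eq_sq_norm y v).choose_spec.1

lemma apply_stretch_smul (y : Y) (v : E) : g y (hg.stretch y v • v) = ‖v‖ ^ 2 :=
  (hg.exists_smul_eq_sq_norm y v).choose_spec.2

lemma stretch_smul_eq {y : Y} {v : E} {t : ℝ} (ht : 0 ≤ t) (htv : g y (t • v) = ‖v‖ ^ 2) :
    hg.stretch y v • v = t • v := by
  rcases eq_or_ne v 0 with rfl | hv
  · simp only [smul_zero]
  · rw [(hg.strictMonoOn y hv).injOn (hg.stretch_nonneg y v) ht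
      ((hg.apply_stretch_smul y v).trans htv.symm)]

lemma stretch_pos {y : Y} {v : E} (hv : v ≠ 0) : 0 < hg.stretch y v := by
  refine (hg.stretch_nonneg y v).lt_of_ne fun hzero ↦ ?_
  have h := hg.apply_stretch_smul y v
  rw [← hzero, zero_smul, hg.map_zero] at h
  exact pow_ne_zero 2 (norm_ne_zero_iff.2 hv) h.symm

lemma radialRescale_stretch_smul (y : Y) (v : E) :
    radialRescale (g y) (hg.stretch y v • v) = v := by
  rcases eq_or_ne v 0 with rfl | hv
  · simp only [radialRescale, smul_zero]
  · have ht := hg.stretch_pos (y := y) hv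
    have hv' : ‖v‖ ≠ 0 := norm_ne_zero_iff.2 hv
    rw [radialRescale, hg.apply_stretch_smul, Real.sqrt_sq (norm_nonneg v), norm_smul,
      Real.norm_of_nonneg ht.le, smul_smul]
    field_simp
    exact one_smul ℝ v

lemma stretch_smul_radialRescale (y : Y) (w : E) :
    hg.stretch y (radialRescale (g y) w) • radialRescale (g y) w = w := by
  rcases eq_or_ne w 0 with rfl | hw
  · simp only [radialRescale, smul_zero]
  · have hw' : 0 < ‖w‖ := norm_pos_iff.2 hw
    have hgw : 0 < g y w :=
      (mul_pos hg.pos (pow_pos hw' 2)).trans_le (hg.mul_sq_norm_le y w)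
    have hunscale : (‖w‖ / √(g y w)) • radialRescale (g y) w = w := by
      have := (Real.sqrt_pos.2 hgw).ne'
      rw [radialRescale, smul_smul]
      field_simp
      exact one_smul ℝ w
    rw [hg.stretch_smul_eq (t := ‖w‖ / √(g y w)) (by positivity), hunscale]
    rw [hunscale, hg.sq_norm_radialRescale]

lemma norm_stretch_smul_le (y : Y) (v : E) : ‖hg.stretch y v • v‖ ≤ √(‖v‖ ^ 2 / c) := by
  refine Real.le_sqrt_of_sq_le ((le_div_iff₀' hg.pos).2 ?_)
  exact (hg.mul_sq_norm_le y _).trans_eq (hg.apply_stretch_smul y v)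

lemma continuous_stretch_smul : Continuous fun p : Y × E ↦ hg.stretch p.1 p.2 • p.2 := by
  refine continuous_iff_continuousAt.2 fun p ↦ ?_
  rcases eq_or_ne p.2 0 with hp | hp
  · rw [ContinuousAt, hp, smul_zero, tendsto_zero_iff_norm_tendsto_zero]
    refine squeeze_zero (fun _ ↦ norm_nonneg _) (fun q ↦ hg.norm_stretch_smul_le q.1 q.2) ?_
    have hbound : Continuous fun q : Y × E ↦ √(‖q.2‖ ^ 2 / c) := by fun_prop
    simpa [hp] using hbound.tendsto p
  · have hmono : ∀ᶠ q : Y × E in 𝓝 p, StrictMonoOn (fun t : ℝ ↦ g q.1 (t • q.2)) (Ici 0) := by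
      filter_upwards [continuousAt_snd.eventually_ne hp] with q hq using hg.strictMonoOn q.1 hq
    have hstretch : ContinuousAt (fun q : Y × E ↦ hg.stretch q.1 q.2) p :=
      continuousAt_of_strictMonoOn (fun t ↦ (hg.continuous_smul t).continuousAt) (by fun_prop) hmono
        (fun q ↦ hg.stretch_nonneg q.1 q.2) (fun q ↦ hg.apply_stretch_smul q.1 q.2)
    exact hstretch.smul continuousAt_snd

/-- The fibrewise change of coordinates of `Y × E` that turns `g y` into the square of the
norm. -/
noncomputable def rescaleHomeomorph : Y × E ≃ₜ Y × E where
  toFun p := (p.1, radialRescale (g p.1) p.2)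
  invFun p := (p.1, hg.stretch p.1 p.2 • p.2)
  left_inv p := Prod.ext rfl (hg.stretch_smul_radialRescale p.1 p.2)
  right_inv p := Prod.ext rfl (hg.radialRescale_stretch_smul p.1 p.2)
  continuous_toFun := continuous_fst.prodMk hg.continuous_radialRescale
  continuous_invFun := continuous_fst.prodMk hg.continuous_stretch_smul

lemma rescaleHomeomorph_symm_map {a : Y → Y} {b : E ≃ₗᵢ[ℝ] E}
    (hab : ∀ y w, g (a y) (b w) = g y w) (p : Y × E) :
    hg.rescaleHomeomorph.symm (Prod.map a b p) = Prod.map a b (hg.rescaleHomeomorph.symm p) := by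
  have hmap (q : Y × E) :
      hg.rescaleHomeomorph (Prod.map a b q) = Prod.map a b (hg.rescaleHomeomorph q) :=
    Prod.ext rfl (radialRescale_map b (hab q.1) q.2)
  rw [Homeomorph.symm_apply_eq, hmap, Homeomorph.apply_symm_apply]

end RadialFamily

end RadialFamily

section StronglyConcaveFamily

variable {Y E : Type*} [TopologicalSpace Y] [NormedAddCommGroup E] [NormedSpace ℝ E]

/-- A continuous parameter-dependent translation `(y, w) ↦ (y, h y + w)` as a homeomorphism. -/
def fiberwiseTranslation {h : Y → E} (hh : Continuous h) : Y × E ≃ₜ Y × E where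
  toEquiv := Equiv.prodShear (Equiv.refl Y) fun y ↦ Equiv.addLeft (h y)
  continuous_toFun := by
    change Continuous fun p : Y × E ↦ (p.1, h p.1 + p.2)
    fun_prop
  continuous_invFun := by
    change Continuous fun p : Y × E ↦ (p.1, -h p.1 + p.2)
    fun_prop

/-- A continuous family of strongly concave differentiable functions `f y` on `E`, whose
derivatives at a fixed point of `E` depend continuously on the parameter `y`. -/
structure StronglyConcaveFamily (C : ℝ) (f : Y → E → ℝ) : Prop where
  pos : 0 < C
  continuous : Continuous (uncurry f)
  differentiable : ∀ y, Differentiable ℝ (f y)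
  continuous_fderiv : ∀ w, Continuous fun y ↦ fderiv ℝ (f y) w
  stronglyAntitoneFDeriv : ∀ y, StronglyAntitoneFDeriv C (f y)

namespace StronglyConcaveFamily

variable {C : ℝ} {f : Y → E → ℝ} (hf : StronglyConcaveFamily C f)

include hf

lemma strictConcaveOn (y : Y) : StrictConcaveOn ℝ univ (f y) :=
  ((hf.stronglyAntitoneFDeriv y).strongConcaveOn_univ (hf.differentiable y)).strictConcaveOn hf.pos

variable [CompleteSpace E]

lemma exists_isMaxOn (y : Y) : ∃ a, IsMaxOn (f y) univ a :=
  exists_isMaxOn_of_strongConcaveOn hf.pos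
    ((hf.stronglyAntitoneFDeriv y).strongConcaveOn_univ (hf.differentiable y))
    (hf.differentiable y).continuous
    ((hf.stronglyAntitoneFDeriv y).bddAbove_range hf.pos (hf.differentiable y))

/-- The point at which `f y` attains its maximum. -/
noncomputable def argmax (y : Y) : E := (hf.exists_isMaxOn y).choose

lemma isMaxOn_argmax (y : Y) : IsMaxOn (f y) univ (hf.argmax y) :=
  (hf.exists_isMaxOn y).choose_spec

lemma argmax_eq_of_isMaxOn {y : Y} {a : E} (ha : IsMaxOn (f y) univ a) : hf.argmax y = a :=
  (hf.strictConcaveOn y).eq_of_isMaxOn (hf.isMaxOn_argmax y) ha (mem_univ _) (mem_univ _)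

lemma argmax_eq_of_fderiv_eq_zero {y : Y} {a : E} (ha : fderiv ℝ (f y) a = 0) :
    hf.argmax y = a :=
  hf.argmax_eq_of_isMaxOn <|
    (hf.stronglyAntitoneFDeriv y).isMaxOn_univ_of_fderiv_eq_zero hf.pos.le (hf.differentiable y) ha

lemma fderiv_argmax (y : Y) : fderiv ℝ (f y) (hf.argmax y) = 0 :=
  ((hf.isMaxOn_argmax y).isLocalMax univ_mem).fderiv_eq_zero

lemma norm_argmax_sub_le (y : Y) (a : E) : ‖hf.argmax y - a‖ ≤ ‖fderiv ℝ (f y) a‖ / C := by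
  have hinc := hf.stronglyAntitoneFDeriv y a (hf.argmax y - a)
  rw [add_sub_cancel, hf.fderiv_argmax, zero_apply] at hinc
  have hop := (le_abs_self _).trans ((fderiv ℝ (f y) a).le_opNorm (hf.argmax y - a))
  rw [le_div_iff₀ hf.pos]
  rcases (norm_nonneg (hf.argmax y - a)).eq_or_lt with hzero | hpos
  · rw [← hzero, zero_mul]
    exact norm_nonneg _
  · refine le_of_mul_le_mul_right ?_ hpos
    linarith

lemma continuous_argmax : Continuous hf.argmax := by
  refine continuous_iff_continuousAt.2 fun y₀ ↦ tendsto_iff_norm_sub_tendsto_zero.2 ?_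
  refine squeeze_zero (fun _ ↦ norm_nonneg _)
    (fun y ↦ hf.norm_argmax_sub_le y (hf.argmax y₀)) ?_
  simpa [hf.fderiv_argmax] using
    ((hf.continuous_fderiv (hf.argmax y₀)).norm.div_const C).tendsto y₀

lemma radialFamily_gap :
    RadialFamily (C / 2) fun y w ↦ f y (hf.argmax y) - f y (hf.argmax y + w) where
  pos := half_pos hf.pos
  continuous := by
    have hargmax := hf.continuous_argmax
    exact (hf.continuous.comp (by fun_prop : Continuous fun p : Y × E ↦ (p.1, hf.argmax p.1))).sub
      (hf.continuous.comp (by fun_prop : Continuous fun p : Y × E ↦ (p.1, hf.argmax p.1 + p.2)))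
  map_zero y := by rw [add_zero, sub_self]
  strictMonoOn y w hw s hs t ht hst :=
    sub_lt_sub_left (strictAntiOn_ray_of_isMaxOn (hf.strictConcaveOn y) (hf.isMaxOn_argmax y) hw
      hs ht hst) _
  mul_sq_norm_le y w := by
    have hle := (hf.stronglyAntitoneFDeriv y).le_add_fderiv_sub_sq (hf.differentiable y)
      (hf.argmax y) w
    rw [hf.fderiv_argmax, zero_apply] at hle
    linarith

/-- The fibrewise change of coordinates of `Y × E` that brings every `f y` into the form
`max (f y) - ‖w‖ ^ 2`. -/
noncomputable def normalForm : Y × E ≃ₜ Y × E :=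
  hf.radialFamily_gap.rescaleHomeomorph.symm.trans (fiberwiseTranslation hf.continuous_argmax)

lemma apply_normalForm (y : Y) (w : E) :
    uncurry f (hf.normalForm (y, w)) = f y (hf.argmax y) - ‖w‖ ^ 2 := by
  rw [← hf.radialFamily_gap.apply_stretch_smul y w, sub_sub_cancel]
  rfl

lemma normalForm_zero (y : Y) : hf.normalForm (y, 0) = (y, hf.argmax y) :=
  Prod.ext rfl ((congrArg (hf.argmax y + ·) (smul_zero _)).trans (add_zero _))

lemma argmax_map {a : Y → Y} {b : E ≃ₗᵢ[ℝ] E} (hab : ∀ y w, f (a y) (b w) = f y w) (y : Y) :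
    hf.argmax (a y) = b (hf.argmax y) := by
  refine hf.argmax_eq_of_isMaxOn fun w _ ↦ ?_
  calc f (a y) w = f y (b.symm w) := by rw [← hab y (b.symm w), b.apply_symm_apply]
    _ ≤ f y (hf.argmax y) := hf.isMaxOn_argmax y (mem_univ _)
    _ = f (a y) (b (hf.argmax y)) := (hab _ _).symm

lemma normalForm_map {a : Y → Y} {b : E ≃ₗᵢ[ℝ] E} (hab : ∀ y w, f (a y) (b w) = f y w)
    (p : Y × E) : hf.normalForm (Prod.map a b p) = Prod.map a b (hf.normalForm p) := by
  have hgap (y : Y) (w : E) : f (a y) (hf.argmax (a y)) - f (a y) (hf.argmax (a y) + b w) =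
      f y (hf.argmax y) - f y (hf.argmax y + w) := by
    rw [hf.argmax_map hab, ← map_add, hab, hab]
  have htranslate (q : Y × E) : fiberwiseTranslation hf.continuous_argmax (Prod.map a b q) =
      Prod.map a b (fiberwiseTranslation hf.continuous_argmax q) := by
    refine Prod.ext rfl ?_
    change hf.argmax (a q.1) + b q.2 = b (hf.argmax q.1 + q.2)
    rw [hf.argmax_map hab, map_add]
  simp only [normalForm, Homeomorph.trans_apply,
    hf.radialFamily_gap.rescaleHomeomorph_symm_map hgap, htranslate]

end StronglyConcaveFamily

end StronglyConcaveFamily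

section Submodule

variable {X : Type*} [NormedAddCommGroup X]

lemma hasFDerivAt_add_coe [NormedSpace ℝ X] {K : Submodule ℝ X} {F : X → ℝ} {x : X} {w : K}
    (hF : DifferentiableAt ℝ F (x + w)) :
    HasFDerivAt (fun v : K ↦ F (x + v)) ((fderiv ℝ F (x + w)).comp K.subtypeL) w :=
  hF.hasFDerivAt.comp w (K.subtypeL.hasFDerivAt.const_add x)

lemma stronglyConcaveFamily_of_contDiff [NormedSpace ℝ X] {Y : Type*} [TopologicalSpace Y]
    {K : Submodule ℝ X} {F : X → ℝ} (hF : ContDiff ℝ 1 F) {C : ℝ} (hC : 0 < C)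
    (hconc : ∀ x, ∀ h ∈ K, fderiv ℝ F (x + h) h - fderiv ℝ F x h ≤ -C * ‖h‖ ^ 2)
    {p : Y → X} (hp : Continuous p) :
    StronglyConcaveFamily C fun y (w : K) ↦ F (p y + w) := by
  have hderiv (y : Y) (w : K) := hasFDerivAt_add_coe (hF.differentiable one_ne_zero (p y + w))
  have : Continuous (fderiv ℝ F) := hF.continuous_fderiv one_ne_zero
  refine ⟨hC, hF.continuous.comp (by fun_prop : Continuous fun q : Y × K ↦ p q.1 + (q.2 : X)),
    fun y w ↦ (hderiv y w).differentiableAt, fun w ↦ ?_, fun y w v ↦ ?_⟩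
  · simp only [(hderiv _ w).fderiv]
    fun_prop
  · rw [(hderiv y (w + v)).fderiv, (hderiv y w).fderiv, Submodule.coe_add, ← add_assoc]
    exact hconc (p y + w) v v.2

variable [InnerProductSpace ℝ X] {K : Submodule ℝ X} [K.HasOrthogonalProjection]

lemma symm_apply_mem_of_invariant {g : X ≃ₗᵢ[ℝ] X} (hg : ∀ v ∈ Kᗮ, g v ∈ Kᗮ) {w : X}
    (hw : w ∈ K) : g.symm w ∈ K := by
  rw [← K.orthogonal_orthogonal]
  refine (Kᗮ.mem_orthogonal _).2 fun u hu ↦ ?_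
  rw [← g.inner_map_map, g.apply_symm_apply]
  exact Submodule.inner_left_of_mem_orthogonal hw (hg u hu)

/-- The restriction to `K` of an isometry that leaves `K` and its orthogonal complement
invariant. -/
def restrictInvariant (g : X ≃ₗᵢ[ℝ] X) (hg : ∀ v ∈ K, g v ∈ K)
    (hg' : ∀ v ∈ Kᗮ, g v ∈ Kᗮ) : K ≃ₗᵢ[ℝ] K where
  toLinearEquiv := LinearEquiv.ofLinearMap
    ((g : X →ₗ[ℝ] X).restrict hg)
    ((g.symm : X →ₗ[ℝ] X).restrict fun _ ↦ symm_apply_mem_of_invariant hg')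
    (by ext w; exact g.apply_symm_apply w) (by ext w; exact g.symm_apply_apply w)
  norm_map' w := g.norm_map w

/-- The decomposition of `X` along `K` as a product, with the orthogonal complement as base and `K`
as fibre. -/
noncomputable def orthogonalProdEquiv (K : Submodule ℝ X) [K.HasOrthogonalProjection] :
    (Kᗮ × K) ≃L[ℝ] X :=
  Kᗮ.prodEquivOfIsTopCompl K K.isTopCompl_orthogonal.symm

lemma orthogonalProdEquiv_apply (p : Kᗮ × K) : orthogonalProdEquiv K p = p.1 + p.2 := rfl

lemma orthogonalProdEquiv_symm_add (ν : Kᗮ) (η : K) :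
    (orthogonalProdEquiv K).symm (ν + η) = (ν, η) :=
  (orthogonalProdEquiv K).symm_apply_apply (ν, η)

lemma orthogonalProdEquiv_map (g : X ≃ₗᵢ[ℝ] X) (hg : ∀ v ∈ K, g v ∈ K)
    (hg' : ∀ v ∈ Kᗮ, g v ∈ Kᗮ) (p : Kᗮ × K) :
    orthogonalProdEquiv K
      (Prod.map ((g : X →ₗ[ℝ] X).restrict hg') (restrictInvariant g hg hg') p) =
      g (orthogonalProdEquiv K p) :=
  (map_add g _ _).symm

end Submodule

theorem splitting_lemma_normal_form_general {X : Type*} [NormedAddCommGroup X]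
    [InnerProductSpace ℝ X] {Hm : Submodule ℝ X} [CompleteSpace Hm] {F : X → ℝ}
    (hF : ContDiff ℝ 1 F) {C : ℝ} (hC : 0 < C)
    (hconc : ∀ x, ∀ h ∈ Hm, fderiv ℝ F (x + h) h - fderiv ℝ F x h ≤ -C * ‖h‖ ^ 2)
    {xbar : X} (hxbar : ∀ w ∈ Hm, fderiv ℝ F xbar w = 0) :
    ∃ (h : X → X) (φ : X ≃ₜ X), Continuous h ∧ (∀ ν, h ν ∈ Hm) ∧ h 0 = 0 ∧ φ 0 = xbar ∧
      (∀ ν ∈ Hmᗮ, ∀ η ∈ Hm, F (φ (ν + η)) = -‖η‖ ^ 2 + F (xbar + ν + h ν)) ∧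
      ∀ g : X ≃ₗᵢ[ℝ] X, (∀ v ∈ Hm, g v ∈ Hm) → (∀ v ∈ Hmᗮ, g v ∈ Hmᗮ) → g xbar = xbar →
        (∀ v, F (g v) = F v) → (∀ ν, h (g ν) = g (h ν)) ∧ ∀ ξ, φ (g ξ) = g (φ ξ) := by
  have hf : StronglyConcaveFamily C fun (ν : Hmᗮ) (η : Hm) ↦ F (xbar + ν + η) :=
    stronglyConcaveFamily_of_contDiff hF hC hconc (by fun_prop)
  have hargmax_zero : hf.argmax 0 = 0 := hf.argmax_eq_of_fderiv_eq_zero <| by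
    rw [(hasFDerivAt_add_coe (hF.differentiable one_ne_zero _)).fderiv]
    ext w
    simpa using hxbar w w.2
  have hargmax_cont := hf.continuous_argmax
  let e := orthogonalProdEquiv Hm
  let φ : X ≃ₜ X := e.symm.toHomeomorph.trans <| hf.normalForm.trans <|
    e.toHomeomorph.trans (Homeomorph.addLeft xbar)
  have hφ (x : X) : φ x = xbar + e (hf.normalForm (e.symm x)) := rfl
  refine ⟨fun x ↦ hf.argmax (e.symm x).1, φ, by fun_prop, fun x ↦ (hf.argmax _).2,
    by simp [hargmax_zero], ?_, fun ν hν η hη ↦ ?_, fun g hg hg' hgxbar hgF ↦ ?_⟩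
  · rw [hφ, map_zero, ← Prod.mk_zero_zero, hf.normalForm_zero, hargmax_zero, Prod.mk_zero_zero,
      map_zero, add_zero]
  · have hν' : e.symm ν = (⟨ν, hν⟩, 0) := by simpa using orthogonalProdEquiv_symm_add ⟨ν, hν⟩ 0
    have hνη : e.symm (ν + η) = (⟨ν, hν⟩, ⟨η, hη⟩) :=
      orthogonalProdEquiv_symm_add ⟨ν, hν⟩ ⟨η, hη⟩
    beta_reduce
    rw [hφ, hνη, hν', orthogonalProdEquiv_apply, ← add_assoc, neg_add_eq_sub]
    exact hf.apply_normalForm _ _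
  · let a := (g : X →ₗ[ℝ] X).restrict hg'
    let b := restrictInvariant g hg hg'
    have hab (ν : Hmᗮ) (η : Hm) : F (xbar + a ν + b η) = F (xbar + ν + η) := by
      rw [← hgF (xbar + ν + η), map_add, map_add, hgxbar]
      rfl
    have he (p : Hmᗮ × Hm) : e (Prod.map a b p) = g (e p) := orthogonalProdEquiv_map g hg hg' p
    have he_symm (x : X) : e.symm (g x) = Prod.map a b (e.symm x) := by
      rw [e.symm_apply_eq, he, e.apply_symm_apply]
    refine ⟨fun x ↦ ?_, fun x ↦ ?_⟩
    · beta_reduce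
      rw [he_symm]
      exact congrArg Subtype.val (hf.argmax_map hab _)
    · rw [hφ, hφ, he_symm, hf.normalForm_map hab, he, map_add, hgxbar]

/-- Lemma 3.5 (splitting-lemma-type normal form): if the `C¹` functional `F`
is uniformly concave in the directions of the finite-dimensional subspace
`H⁻ = Hm` of the Hilbert space `X = H⁺ ⊕ H⁻` (with `H⁺ = Hmᗮ`), then near a
critical point `x̄` there are a continuous fiberwise-maximum map `h` and a
local homeomorphism `φ` with `F(φ(ν + η)) = -‖η‖² + F(x̄ + ν + h ν)`; moreover
`h` and `φ` can be chosen equivariantly with respect to any finite group `Γ`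
acting by linear isometries preserving `H⁺`, `H⁻`, `x̄` and `F`. -/
theorem splitting_lemma_normal_form
    (X : Type*) [NormedAddCommGroup X] [InnerProductSpace ℝ X] [CompleteSpace X]
    (Hm : Submodule ℝ X) [FiniteDimensional ℝ Hm]
    (F : X → ℝ) (hF : ContDiff ℝ 1 F)
    (C : ℝ) (hC : 0 < C)
    (hconc : ∀ x : X, ∀ h ∈ Hm,
      fderiv ℝ F (x + h) h - fderiv ℝ F x h ≤ -C * ‖h‖ ^ 2)
    (xbar : X) (hxbar : fderiv ℝ F xbar = 0)
    (Γ : Type*) [Group Γ] [Finite Γ] (ρ : Γ →* (X ≃ₗᵢ[ℝ] X))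
    (hρm : ∀ γ : Γ, ∀ v ∈ Hm, ρ γ v ∈ Hm)
    (hρp : ∀ γ : Γ, ∀ v ∈ Hmᗮ, ρ γ v ∈ Hmᗮ)
    (hρfix : ∀ γ : Γ, ρ γ xbar = xbar)
    (hρF : ∀ (γ : Γ) (v : X), F (ρ γ v) = F v) :
    ∃ r : ℝ, 0 < r ∧
    ∃ (h φ ψ : X → X) (U : Set X),
      IsOpen U ∧ xbar ∈ U ∧
      (∀ ν, h ν ∈ Hm) ∧ h 0 = 0 ∧
      ContinuousOn h {ν : X | ν ∈ Hmᗮ ∧ ‖ν‖ < r} ∧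
      φ 0 = xbar ∧
      Set.BijOn φ (Metric.ball (0 : X) r) U ∧
      ContinuousOn φ (Metric.ball (0 : X) r) ∧
      ContinuousOn ψ U ∧
      (∀ ξ ∈ Metric.ball (0 : X) r, ψ (φ ξ) = ξ) ∧
      (∀ u ∈ U, φ (ψ u) = u) ∧
      (∀ ν η : X, ν ∈ Hmᗮ → η ∈ Hm → ν + η ∈ Metric.ball (0 : X) r →
        F (φ (ν + η)) = -‖η‖ ^ 2 + F (xbar + ν + h ν)) ∧
      (∀ γ : Γ, ∀ ν ∈ Hmᗮ, ‖ν‖ < r → h (ρ γ ν) = ρ γ (h ν)) ∧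
      (∀ γ : Γ, ∀ ξ ∈ Metric.ball (0 : X) r, φ (ρ γ ξ) = ρ γ (φ ξ)) := by
  have : CompleteSpace Hm := FiniteDimensional.complete ℝ Hm
  obtain ⟨h, φ, hcont, hmem, hzero, hφzero, hnormal, hequiv⟩ :=
    splitting_lemma_normal_form_general hF hC hconc (xbar := xbar) fun w _ ↦ by rw [hxbar]; rfl
  have hequiv' (γ : Γ) := hequiv (ρ γ) (hρm γ) (hρp γ) (hρfix γ) (hρF γ)
  exact ⟨1, one_pos, h, φ, φ.symm, φ '' Metric.ball 0 1, φ.isOpenMap _ Metric.isOpen_ball,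
    ⟨0, Metric.mem_ball_self one_pos, hφzero⟩, hmem, hzero, hcont.continuousOn, hφzero,
    φ.injective.injOn.bijOn_image, φ.continuous.continuousOn, φ.symm.continuous.continuousOn,
    fun ξ _ ↦ φ.symm_apply_apply ξ, fun u _ ↦ φ.apply_symm_apply u,
    fun ν η hν hη _ ↦ hnormal ν hν η hη, fun γ ν _ _ ↦ (hequiv' γ).1 ν,
    fun γ ξ _ ↦ (hequiv' γ).2 ξ⟩
end

section
/- Let E be a real Hilbert space, G ⊆ E a closed subspace with orthogonal complement G^⊥, and Ψ: E → ℝ a Fréchet C^1 functional such that there is ω > 0 with ⟨Ψ′(u) − Ψ′(v), u − v⟩ ≥ (ω/2)‖u − v‖² whenever u − v ∈ G^⊥. Then for every g ∈ G the function h ↦ Ψ(g + h) on G^⊥ attains a unique minimum at some point h(g) ∈ G^⊥, and h(g) is the unique element of G^⊥ satisfying ⟨Ψ′(g + h(g)), h⟩ = 0 for all h ∈ G^⊥. -/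
/-!
Strong monotonicity of `Ψ′` in the directions of a subspace `K`, integrated along segments, says
that `Ψ` is strongly convex on each translate of `K`. The value of a strongly convex function at a
midpoint lies below the average of its values at the endpoints by a multiple of their squared
distance, so its minimizing sequences are Cauchy and, by completeness of `K`, converge to a
minimizer. Strict convexity makes the minimizer unique, and for a convex function on a subspace
minimizers and critical points coincide.
-/

open Set Filter Topology AffineMap

section

variable {E : Type*} [NormedAddCommGroup E] [NormedSpace ℝ E] {s : Set E} {f : E → ℝ} {m : ℝ}

lemma hasDerivWithinAt_comp_lineMap_Icc (hs : Convex ℝ s) {x y : E} (hx : x ∈ s) (hy : y ∈ s)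
    {t : ℝ} {f' : E →L[ℝ] ℝ} (hf : HasFDerivWithinAt f f' s (lineMap x y t)) :
    HasDerivWithinAt (f ∘ lineMap x y) (f' (y - x)) (Icc (0 : ℝ) 1) t :=
  hf.comp_hasDerivWithinAt t hasDerivWithinAt_lineMap (hs.mapsTo_lineMap hx hy)

lemma add_quadratic_le_of_strongMonotone_fderiv (hs : Convex ℝ s) {f' : E → E →L[ℝ] ℝ}
    (hf : ∀ x ∈ s, HasFDerivWithinAt f (f' x) s x)
    (hf' : ∀ x ∈ s, ∀ y ∈ s, m * ‖y - x‖ ^ 2 ≤ f' y (y - x) - f' x (y - x))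
    {x y : E} (hx : x ∈ s) (hy : y ∈ s) :
    f x + f' x (y - x) + m / 2 * ‖y - x‖ ^ 2 ≤ f y := by
  let γ : ℝ → E := lineMap x y
  have hγ : ∀ t ∈ Icc (0 : ℝ) 1, γ t ∈ s := fun t ht ↦ hs.lineMap_mem hx hy ht
  let φ : ℝ → ℝ := fun t ↦ f (γ t) - t * f' x (y - x) - t ^ 2 * (m / 2 * ‖y - x‖ ^ 2)
  let φ' : ℝ → ℝ := fun t ↦ f' (γ t) (y - x) - f' x (y - x) - t * (m * ‖y - x‖ ^ 2)
  have hφ : ∀ t ∈ Icc (0 : ℝ) 1, HasDerivWithinAt φ (φ' t) (Icc 0 1) t := by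
    intro t ht
    have hlin := (hasDerivWithinAt_id t (Icc 0 1)).mul_const (f' x (y - x))
    have hquad := ((hasDerivWithinAt_id t (Icc 0 1)).pow 2).mul_const (m / 2 * ‖y - x‖ ^ 2)
    have hderiv :=
      ((hasDerivWithinAt_comp_lineMap_Icc hs hx hy (hf _ (hγ t ht))).sub hlin).sub hquad
    refine hderiv.congr_deriv ?_
    simp only [φ', γ, id_eq]
    ring
  have hφ'_nonneg : ∀ t ∈ Ioo (0 : ℝ) 1, 0 ≤ φ' t := by
    intro t ht
    have hmono := hf' x hx (γ t) (hγ t (Ioo_subset_Icc_self ht))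
    have hsub : γ t - x = t • (y - x) := lineMap_vsub_left x y t
    rw [hsub, norm_smul, mul_pow, Real.norm_eq_abs, sq_abs, map_smul, map_smul] at hmono
    simp only [smul_eq_mul] at hmono
    have hmul : 0 ≤ t * φ' t := by
      simp only [φ']
      linarith
    exact nonneg_of_mul_nonneg_right hmul ht.1
  have hmono : MonotoneOn φ (Icc 0 1) := by
    refine monotoneOn_of_hasDerivWithinAt_nonneg (f' := φ') (convex_Icc 0 1)
      (fun t ht ↦ (hφ t ht).continuousWithinAt) ?_ ?_ <;> rw [interior_Icc]
    · exact fun t ht ↦ (hφ t (Ioo_subset_Icc_self ht)).mono Ioo_subset_Icc_self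
    · exact hφ'_nonneg
  have hends : φ 0 ≤ φ 1 := hmono (by simp) (by simp) zero_le_one
  simp only [φ, γ, lineMap_apply_zero, lineMap_apply_one] at hends
  linarith

lemma strongConvexOn_of_strongMonotone_fderiv (hs : Convex ℝ s) {f' : E → E →L[ℝ] ℝ}
    (hf : ∀ x ∈ s, HasFDerivWithinAt f (f' x) s x)
    (hf' : ∀ x ∈ s, ∀ y ∈ s, m * ‖y - x‖ ^ 2 ≤ f' y (y - x) - f' x (y - x)) :
    StrongConvexOn s m f := by
  refine ⟨hs, fun x hx y hy a b ha hb hab ↦ ?_⟩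
  set z := a • x + b • y with hz
  have hzs : z ∈ s := hs hx hy ha hb hab
  obtain rfl : a = 1 - b := eq_sub_of_add_eq hab
  have hzx : x - z = b • (x - y) := by rw [hz]; module
  have hzy : y - z = -((1 - b) • (x - y)) := by rw [hz]; module
  have hfx := add_quadratic_le_of_strongMonotone_fderiv hs hf hf' hzs hx
  have hfy := add_quadratic_le_of_strongMonotone_fderiv hs hf hf' hzs hy
  rw [hzx, map_smul, norm_smul, mul_pow, Real.norm_eq_abs, sq_abs, smul_eq_mul] at hfx
  rw [hzy, map_neg, map_smul, norm_neg, norm_smul, mul_pow, Real.norm_eq_abs, sq_abs,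
    smul_eq_mul] at hfy
  simp only [smul_eq_mul]
  linear_combination (1 - b) * hfx + b * hfy

lemma le_of_strongConvexOn_of_le_on_sphere (hf : StrongConvexOn s m f) {x y : E} (hx : x ∈ s)
    (hy : y ∈ s) {r δ : ℝ} (hr : 0 < r) (hxy : r ≤ ‖x - y‖)
    (hsphere : ∀ z ∈ s, ‖x - z‖ = r → f x - δ ≤ f z) :
    f x - δ / r * ‖x - y‖ + m / 2 * (‖x - y‖ * (‖x - y‖ - r)) ≤ f y := by
  set d := ‖x - y‖ with hd
  have hd_pos : 0 < d := hr.trans_le hxy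
  let b : ℝ := r / d
  have hb : 0 < b := div_pos hr hd_pos
  have hb_le : b ≤ 1 := (div_le_one hd_pos).2 hxy
  have hbd : b * d = r := div_mul_cancel₀ r hd_pos.ne'
  let z := (1 - b) • x + b • y
  have hz : z ∈ s := hf.1 hx hy (sub_nonneg.2 hb_le) hb.le (sub_add_cancel 1 b)
  have hxz : ‖x - z‖ = r := by
    rw [show x - z = b • (x - y) by module, norm_smul, Real.norm_of_nonneg hb.le, ← hd, hbd]
  have hfz : f z ≤ (1 - b) * f x + b * f y - (1 - b) * b * (m / 2 * d ^ 2) :=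
    hf.2 hx hy (sub_nonneg.2 hb_le) hb.le (sub_add_cancel 1 b)
  refine le_of_mul_le_mul_left ?_ hb
  calc b * (f x - δ / r * d + m / 2 * (d * (d - r)))
      = f x - δ - (1 - b) * f x + (1 - b) * b * (m / 2 * d ^ 2) := by
        rw [← hbd]
        field_simp
        ring
    _ ≤ b * f y := by linarith [hsphere z hz hxz]

lemma bddBelow_image_of_strongConvexOn (hf : StrongConvexOn s m f) (hm : 0 < m) {x : E}
    (hx : x ∈ s) (hfx : LowerSemicontinuousWithinAt f s x) : BddBelow (f '' s) := by
  obtain ⟨ρ, hρ, hball⟩ := Metric.mem_nhdsWithin_iff.1 (hfx (f x - 1) (sub_one_lt _))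
  have hnear : ∀ z ∈ s, ‖x - z‖ < ρ → f x - 1 < f z := fun z hz hxz ↦
    hball ⟨by rwa [Metric.mem_ball, dist_comm, dist_eq_norm], hz⟩
  obtain ⟨r, hr, hrρ⟩ := exists_between hρ
  let C : ℝ := 1 / r + m / 2 * r
  refine ⟨f x - 1 - C ^ 2 / (2 * m), ?_⟩
  rintro _ ⟨y, hy, rfl⟩
  have hC : 0 ≤ C ^ 2 / (2 * m) := by positivity
  rcases lt_or_ge ‖x - y‖ r with hxy | hxy
  · linarith [hnear y hy (hxy.trans hrρ)]
  · have hfar := le_of_strongConvexOn_of_le_on_sphere hf hx hy hr hxy fun z hz hxz ↦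
      (hnear z hz (hxz.trans_lt hrρ)).le
    have hsquare : 0 ≤ m / 2 * (‖x - y‖ - C / m) ^ 2 := by positivity
    have hexpand : m / 2 * (‖x - y‖ - C / m) ^ 2 =
        m / 2 * (‖x - y‖ * (‖x - y‖ - r)) - 1 / r * ‖x - y‖ + C ^ 2 / (2 * m) := by
      simp only [C]
      field_simp
      ring
    linarith

lemma cauchySeq_of_strongConvexOn (hf : StrongConvexOn s m f) (hm : 0 < m) {c : ℝ}
    (hc : ∀ y ∈ s, c ≤ f y) {ι : Type*} [Nonempty ι] [SemilatticeSup ι] {u : ι → E}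
    (hu : ∀ i, u i ∈ s) (hlim : Tendsto (f ∘ u) atTop (𝓝 c)) : CauchySeq u := by
  refine Metric.cauchySeq_iff.2 fun ε hε ↦ ?_
  have hnear : ∀ᶠ i in atTop, f (u i) < c + m / 8 * ε ^ 2 :=
    hlim.eventually_lt_const (lt_add_of_pos_right c (by positivity))
  obtain ⟨N, hN⟩ := eventually_atTop.1 hnear
  refine ⟨N, fun i hi j hj ↦ ?_⟩
  have hmid_mem : (1 / 2 : ℝ) • u i + (1 / 2 : ℝ) • u j ∈ s :=
    hf.1 (hu i) (hu j) (by norm_num) (by norm_num) (by norm_num)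
  have hmid := hf.2 (hu i) (hu j) (by norm_num : (0 : ℝ) ≤ 1 / 2)
    (by norm_num : (0 : ℝ) ≤ 1 / 2) (by norm_num)
  have hsq : m / 8 * ‖u i - u j‖ ^ 2 < m / 8 * ε ^ 2 := by
    simp only [smul_eq_mul] at hmid
    linarith [hc _ hmid_mem, hN i hi, hN j hj]
  rw [dist_eq_norm]
  exact lt_of_pow_lt_pow_left₀ 2 hε.le (lt_of_mul_lt_mul_left hsq (by positivity))

theorem exists_isMinOn_of_strongConvexOn (hs : IsComplete s) (hne : s.Nonempty)
    (hf : StrongConvexOn s m f) (hm : 0 < m) (hlsc : LowerSemicontinuousOn f s) :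
    ∃ x ∈ s, IsMinOn f s x := by
  obtain ⟨x₀, hx₀⟩ := hne
  have hbdd : BddBelow (f '' s) := bddBelow_image_of_strongConvexOn hf hm hx₀ (hlsc x₀ hx₀)
  have hle : ∀ y ∈ s, sInf (f '' s) ≤ f y := fun y hy ↦ csInf_le hbdd (mem_image_of_mem f hy)
  obtain ⟨v, -, hv, hvs⟩ := exists_seq_tendsto_sInf ⟨f x₀, mem_image_of_mem f hx₀⟩ hbdd
  choose u hu huv using hvs
  obtain rfl : f ∘ u = v := funext huv
  obtain ⟨x, hx, hux⟩ :=
    cauchySeq_tendsto_of_isComplete hs hu (cauchySeq_of_strongConvexOn hf hm hle hu hv)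
  have hux_within : Tendsto u atTop (𝓝[s] x) :=
    tendsto_nhdsWithin_iff.2 ⟨hux, Eventually.of_forall hu⟩
  have hfx : f x ≤ sInf (f '' s) := le_of_forall_lt_imp_le_of_dense fun a ha ↦
    ge_of_tendsto hv ((hux_within.eventually (hlsc x hx a ha)).mono fun _ h ↦ h.le)
  exact ⟨x, hx, fun y hy ↦ hfx.trans (hle y hy)⟩

lemma add_fderiv_sub_le_of_convexOn (hf : ConvexOn ℝ s f) {x y : E} (hx : x ∈ s) (hy : y ∈ s)
    {f' : E →L[ℝ] ℝ} (hf' : HasFDerivWithinAt f f' s x) : f x + f' (y - x) ≤ f y := by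
  have hφ : ConvexOn ℝ (Icc (0 : ℝ) 1) (f ∘ lineMap x y) :=
    (hf.comp_affineMap (lineMap x y)).subset (hf.1.mapsTo_lineMap hx hy) (convex_Icc 0 1)
  have hφ' := hasDerivWithinAt_comp_lineMap_Icc (t := 0) hf.1 hx hy
    (by rwa [lineMap_apply_zero])
  have hslope := hφ.le_slope_of_hasDerivWithinAt (by simp) (by simp) zero_lt_one hφ'
  simp only [slope_def_field, Function.comp_apply, lineMap_apply_one, lineMap_apply_zero, sub_zero,
    div_one] at hslope
  linarith

lemma isMinOn_submodule_iff_fderiv_eq_zero {K : Submodule ℝ E} (hf : ConvexOn ℝ (K : Set E) f)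
    {x : E} (hx : x ∈ K) {f' : E →L[ℝ] ℝ} (hf' : HasFDerivWithinAt f f' K x) :
    IsMinOn f K x ↔ ∀ h ∈ K, f' h = 0 := by
  constructor
  · intro hmin h hh
    have hcone : ∀ k ∈ K, k ∈ posTangentConeAt (K : Set E) x := fun k hk ↦
      mem_posTangentConeAt_of_segment_subset (K.convex.segment_subset hx (K.add_mem hx hk))
    exact hmin.localize.hasFDerivWithinAt_eq_zero hf' (hcone h hh) (hcone (-h) (K.neg_mem hh))
  · intro hcrit y hy
    simpa [hcrit _ (K.sub_mem hy hx)] using add_fderiv_sub_le_of_convexOn hf hx hy hf'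

end

theorem reduction_unique_minimum_general
    {E : Type*} [NormedAddCommGroup E] [NormedSpace ℝ E] (K : Submodule ℝ E) [CompleteSpace K]
    {Ψ : E → ℝ} (hΨ : Differentiable ℝ Ψ) {ω : ℝ} (hω : 0 < ω)
    (hconv : ∀ u v : E, u - v ∈ K →
      (ω / 2) * ‖u - v‖ ^ 2 ≤ fderiv ℝ Ψ u (u - v) - fderiv ℝ Ψ v (u - v)) (g : E) :
    ∃ h₀ ∈ K,
      (∀ h ∈ K, Ψ (g + h₀) ≤ Ψ (g + h)) ∧
      (∀ h' ∈ K, (∀ h ∈ K, Ψ (g + h') ≤ Ψ (g + h)) → h' = h₀) ∧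
      (∀ h ∈ K, fderiv ℝ Ψ (g + h₀) h = 0) ∧
      (∀ h' ∈ K, (∀ h ∈ K, fderiv ℝ Ψ (g + h') h = 0) → h' = h₀) := by
  let f : E → ℝ := fun h ↦ Ψ (g + h)
  have hf (h : E) : HasFDerivWithinAt f (fderiv ℝ Ψ (g + h)) K h := by
    rw [← fderiv_comp_add_left]
    exact ((hΨ (g + h)).comp h (by fun_prop)).hasFDerivAt.hasFDerivWithinAt
  have hstrong : StrongConvexOn (K : Set E) (ω / 2) f :=
    strongConvexOn_of_strongMonotone_fderiv K.convex (fun h _ ↦ hf h) fun x hx y hy ↦ by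
      simpa using hconv (g + y) (g + x) (by simpa using K.sub_mem hy hx)
  have hstrict : StrictConvexOn ℝ (K : Set E) f := hstrong.strictConvexOn (half_pos hω)
  have hmin_iff {h : E} (hh : h ∈ K) : IsMinOn f K h ↔ ∀ k ∈ K, fderiv ℝ Ψ (g + h) k = 0 :=
    isMinOn_submodule_iff_fderiv_eq_zero hstrict.convexOn hh (hf h)
  obtain ⟨h₀, hh₀, hmin⟩ := exists_isMinOn_of_strongConvexOn
    (completeSpace_coe_iff_isComplete.1 ‹_›) ⟨0, K.zero_mem⟩ hstrong (half_pos hω)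
    fun h _ ↦ (hf h).continuousWithinAt.lowerSemicontinuousWithinAt
  have huniq {h' : E} (hh' : h' ∈ K) (hmin' : IsMinOn f K h') : h' = h₀ :=
    hstrict.eq_of_isMinOn hmin' hmin hh' hh₀
  exact ⟨h₀, hh₀, hmin, fun h' hh' hmin' ↦ huniq hh' hmin', (hmin_iff hh₀).1 hmin,
    fun h' hh' hcrit ↦ huniq hh' ((hmin_iff hh').2 hcrit)⟩

/-- Part (i) of the finite-dimensional reduction (Lemma 2.10): if `Ψ` is `C¹`
and uniformly convex in the directions of `G^⊥`, then for every `g ∈ G` the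
function `h ↦ Ψ(g + h)` on `G^⊥` attains a unique minimum `h₀`, characterized
by `Ψ′(g + h₀)` vanishing on `G^⊥`. -/
theorem reduction_unique_minimum
    (E : Type*) [NormedAddCommGroup E] [InnerProductSpace ℝ E] [CompleteSpace E]
    (G : Submodule ℝ E) (hG : IsClosed (G : Set E))
    (Ψ : E → ℝ) (hΨ : ContDiff ℝ 1 Ψ)
    (ω : ℝ) (hω : 0 < ω)
    (hconv : ∀ u v : E, u - v ∈ Gᗮ →
      (ω / 2) * ‖u - v‖ ^ 2 ≤ fderiv ℝ Ψ u (u - v) - fderiv ℝ Ψ v (u - v)) :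
    ∀ g ∈ G, ∃ h₀ ∈ Gᗮ,
      (∀ h ∈ Gᗮ, Ψ (g + h₀) ≤ Ψ (g + h)) ∧
      (∀ h' ∈ Gᗮ, (∀ h ∈ Gᗮ, Ψ (g + h') ≤ Ψ (g + h)) → h' = h₀) ∧
      (∀ h ∈ Gᗮ, fderiv ℝ Ψ (g + h₀) h = 0) ∧
      (∀ h' ∈ Gᗮ, (∀ h ∈ Gᗮ, fderiv ℝ Ψ (g + h') h = 0) → h' = h₀) := by
  intro g _
  exact reduction_unique_minimum_general Gᗮ (hΨ.differentiable one_ne_zero) hω hconv g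
end

section
/- Let E be a real Hilbert space, G ⊆ E a closed subspace with orthogonal complement G^⊥, and Ψ: E → ℝ a continuous functional such that for every g ∈ G the map h′ ↦ Ψ(g + h′) is convex on G^⊥. Let h: G → G^⊥ be a continuous map such that Ψ(g + h(g)) ≤ Ψ(g + h′) for all g ∈ G and h′ ∈ G^⊥. For κ ∈ ℝ set Λ^κ = {u ∈ E : Ψ(u) ≤ κ} and Λ̃^κ = {g ∈ G : Ψ(g + h(g)) ≤ κ}. Then the set {g + h(g) : g ∈ Λ̃^κ} is a strong deformation retract of Λ^κ (via the straight-line homotopy in the G^⊥-component), and in particular the embedding g ↦ g + h(g) from Λ̃^κ into Λ^κ is a homotopy equivalence. -/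
/-!
Split `u = g + k` along `E = G ⊕ F`, with `F = Gᗮ` in the Hilbert space case. On each fibre `g + F`
the sublevel sets of `Ψ` are convex, and `g + h g` minimizes `Ψ` there, so every nonempty fibre of
`{Ψ ≤ κ}` is star-shaped about `g + h g`. Contracting all fibres to these centres at once is
continuous, because the projection to `G` and `h` are. What remains is the part of the graph of `h`
below level `κ`, which the projection identifies with its domain in `G`.
-/

open Set
open scoped ContinuousMap unitInterval

section Topology

variable {X Y : Type*} [TopologicalSpace X] [TopologicalSpace Y]

/-- `H` exhibits the subset `A` of `S` as a strong deformation retract of `S`. The homotopy is a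
function on all of `ℝ × X`, of which only the values on `[0, 1] × S` matter. -/
structure IsStrongDeformationRetraction (H : ℝ → X → X) (S A : Set X) : Prop where
  subset : A ⊆ S
  continuousOn : ContinuousOn (fun p : ℝ × X => H p.1 p.2) (Icc 0 1 ×ˢ S)
  mapsTo : ∀ s ∈ Icc (0 : ℝ) 1, MapsTo (H s) S S
  eqOn_zero : EqOn (H 0) id S
  mapsTo_one : MapsTo (H 1) S A
  eqOn : ∀ s ∈ Icc (0 : ℝ) 1, EqOn (H s) id A

namespace IsStrongDeformationRetraction

variable {H : ℝ → X → X} {S A : Set X}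

/-- The retraction at time `1` of a strong deformation retraction. -/
def retraction (hH : IsStrongDeformationRetraction H S A) : C(S, A) where
  toFun u := ⟨H 1 u, hH.mapsTo_one u.2⟩
  continuous_toFun := by
    refine Continuous.subtype_mk ?_ _
    exact hH.continuousOn.comp_continuous (f := fun u : S => ((1 : ℝ), (u : X)))
      (by fun_prop) fun u => ⟨right_mem_Icc.2 zero_le_one, u.2⟩

/-- A strong deformation retraction as a homotopy between self-maps of the ambient set. -/
def homotopy (hH : IsStrongDeformationRetraction H S A) :
    (ContinuousMap.id S).Homotopy ((ContinuousMap.inclusion hH.subset).comp hH.retraction) where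
  toFun p := ⟨H p.1 p.2, hH.mapsTo p.1 p.1.2 p.2.2⟩
  continuous_toFun := by
    refine Continuous.subtype_mk ?_ _
    exact hH.continuousOn.comp_continuous (f := fun p : I × S => ((p.1 : ℝ), (p.2 : X)))
      (by fun_prop) fun p => ⟨p.1.2, p.2.2⟩
  map_zero_left u := Subtype.ext (hH.eqOn_zero u.2)
  map_one_left _ := rfl

theorem retraction_comp_inclusion (hH : IsStrongDeformationRetraction H S A) :
    hH.retraction.comp (ContinuousMap.inclusion hH.subset) = ContinuousMap.id A :=
  ContinuousMap.ext fun a => Subtype.ext (hH.eqOn 1 (right_mem_Icc.2 zero_le_one) a.2)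

/-- The inclusion of a strong deformation retract, as a homotopy equivalence. -/
def homotopyEquiv (hH : IsStrongDeformationRetraction H S A) : A ≃ₕ S where
  toFun := ContinuousMap.inclusion hH.subset
  invFun := hH.retraction
  left_inv := by
    rw [hH.retraction_comp_inclusion]
  right_inv := ⟨hH.homotopy.symm⟩

end IsStrongDeformationRetraction

/-- A map with a continuous left inverse on a set, as a homeomorphism from the set to its image. -/
def homeomorphImageOfLeftInvOn {f : X → Y} {f' : Y → X} {s : Set X} (hf : ContinuousOn f s)
    (hf' : ContinuousOn f' (f '' s)) (hinv : LeftInvOn f' f s) : s ≃ₜ f '' s where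
  toFun := (mapsTo_image f s).restrict
  invFun := hinv.mapsTo (surjOn_image f s) |>.restrict
  left_inv x := Subtype.ext (hinv x.2)
  right_inv y := Subtype.ext (hinv.rightInvOn_image y.2)
  continuous_toFun := hf.mapsToRestrict _
  continuous_invFun := hf'.mapsToRestrict _

end Topology

section Graph

variable {R E : Type*} [Ring R] [AddCommGroup E] [Module R E] [TopologicalSpace E]
  {G F : Submodule R E} {h : E → E}

theorem leftInvOn_projectionL_add (hGF : G.IsTopCompl F) (hh : MapsTo h G F) :
    LeftInvOn (G.projectionL F hGF) (fun g => g + h g) G := fun g hg => by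
  rw [map_add, (Submodule.projectionL_eq_self_iff hGF g).2 hg,
    (Submodule.projectionL_apply_eq_zero_iff hGF).2 (hh hg), add_zero]

/-- The part over `T ⊆ G` of the graph of `h : G → F` is homeomorphic to `T`. -/
noncomputable def graphHomeomorph [ContinuousAdd E] (hGF : G.IsTopCompl F)
    (hh : MapsTo h G F) (hcont : ContinuousOn h G) {T : Set E} (hT : T ⊆ G) :
    T ≃ₜ (fun g => g + h g) '' T :=
  homeomorphImageOfLeftInvOn (continuousOn_id.add (hcont.mono hT))
    (G.projectionL F hGF).continuous.continuousOn
    ((leftInvOn_projectionL_add hGF hh).mono hT)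

end Graph

theorem segment_add_subset_sublevel {𝕜 E β : Type*} [Ring 𝕜] [PartialOrder 𝕜]
    [AddRightMono 𝕜] [AddCommGroup E] [Module 𝕜 E] [LE β] {C : Set E} {Ψ : E → β}
    {g x y : E} {κ : β}
    (hΨ : QuasiconvexOn 𝕜 C fun k => Ψ (g + k)) (hx : x ∈ C) (hy : y ∈ C)
    (hxκ : Ψ (g + x) ≤ κ) (hyκ : Ψ (g + y) ≤ κ) :
    segment 𝕜 (g + x) (g + y) ⊆ {u | Ψ u ≤ κ} := by
  rw [← segment_translate_image, image_subset_iff]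
  exact ((hΨ κ).segment_subset ⟨hx, hxκ⟩ ⟨hy, hyκ⟩).trans fun _ hk => hk.2

section GraphHomotopy

variable {E β : Type*} [AddCommGroup E] [Module ℝ E] [TopologicalSpace E] {G F : Submodule ℝ E}
  {h : E → E}

/-- The straight-line homotopy, in the direction of `F`, from the identity to the projection
along `F` onto the graph `{g + h g | g ∈ G}`. Only the values of `h` on `G` matter. -/
noncomputable def graphHomotopy (hGF : G.IsTopCompl F) (h : E → E) (s : ℝ) (u : E) : E :=
  G.projectionL F hGF u + (1 - s) • (u - G.projectionL F hGF u) + s • h (G.projectionL F hGF u)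

theorem graphHomotopy_zero (hGF : G.IsTopCompl F) (h : E → E) (u : E) :
    graphHomotopy hGF h 0 u = u := by
  simp [graphHomotopy]

theorem graphHomotopy_one (hGF : G.IsTopCompl F) (h : E → E) (u : E) :
    graphHomotopy hGF h 1 u = G.projectionL F hGF u + h (G.projectionL F hGF u) := by
  simp [graphHomotopy]

theorem graphHomotopy_mem_segment (hGF : G.IsTopCompl F) (h : E → E) {s : ℝ}
    (hs : s ∈ Icc (0 : ℝ) 1) (u : E) :
    graphHomotopy hGF h s u ∈
      segment ℝ u (G.projectionL F hGF u + h (G.projectionL F hGF u)) :=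
  ⟨1 - s, s, sub_nonneg.2 hs.2, hs.1, sub_add_cancel 1 s, by unfold graphHomotopy; module⟩

theorem graphHomotopy_graph (hGF : G.IsTopCompl F) (hh : MapsTo h G F) (s : ℝ) {g : E}
    (hg : g ∈ G) : graphHomotopy hGF h s (g + h g) = g + h g := by
  have hproj : G.projectionL F hGF (g + h g) = g := leftInvOn_projectionL_add hGF hh hg
  rw [graphHomotopy, hproj]
  module

theorem segment_projectionL_subset_sublevel [Preorder β] {Ψ : E → β} (hGF : G.IsTopCompl F)
    (hΨ : ∀ g ∈ G, QuasiconvexOn ℝ (F : Set E) fun k => Ψ (g + k)) (hh : MapsTo h G F)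
    (hmin : ∀ g ∈ G, ∀ k ∈ F, Ψ (g + h g) ≤ Ψ (g + k)) {κ : β} {u : E} (hu : Ψ u ≤ κ) :
    segment ℝ u (G.projectionL F hGF u + h (G.projectionL F hGF u)) ⊆ {v | Ψ v ≤ κ} := by
  set g := G.projectionL F hGF u
  have hg : g ∈ G := Submodule.projectionL_apply_mem hGF u
  have hk : u - g ∈ F := Submodule.sub_projection_mem hGF.isCompl u
  have hgk : g + (u - g) = u := add_sub_cancel g u
  have hkκ : Ψ (g + (u - g)) ≤ κ := hgk.symm ▸ hu
  simpa only [hgk] using segment_add_subset_sublevel (hΨ g hg) hk (hh hg) hkκ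
    ((hmin g hg _ hk).trans hkκ)

variable [IsTopologicalAddGroup E] [ContinuousSMul ℝ E]

theorem continuous_graphHomotopy (hGF : G.IsTopCompl F) (hcont : ContinuousOn h G) :
    Continuous fun p : ℝ × E => graphHomotopy hGF h p.1 p.2 := by
  have hproj : Continuous fun p : ℝ × E => G.projectionL F hGF p.2 :=
    (G.projectionL F hGF).continuous.comp continuous_snd
  have hgraph : Continuous fun p : ℝ × E => h (G.projectionL F hGF p.2) :=
    hcont.comp_continuous hproj fun p => Submodule.projectionL_apply_mem hGF p.2
  exact (hproj.add ((continuous_const.sub continuous_fst).smul (continuous_snd.sub hproj))).add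
    (continuous_fst.smul hgraph)

theorem isStrongDeformationRetraction_graphHomotopy (hGF : G.IsTopCompl F) (hh : MapsTo h G F)
    (hcont : ContinuousOn h G) {S : Set E}
    (hS : ∀ u ∈ S, segment ℝ u (G.projectionL F hGF u + h (G.projectionL F hGF u)) ⊆ S) :
    IsStrongDeformationRetraction (graphHomotopy hGF h) S
      ((fun g => g + h g) '' {g | g ∈ G ∧ g + h g ∈ S}) where
  subset := image_subset_iff.2 fun _ hg => hg.2
  continuousOn := (continuous_graphHomotopy hGF hcont).continuousOn
  mapsTo _ hs u hu := hS u hu (graphHomotopy_mem_segment hGF h hs u)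
  eqOn_zero u _ := graphHomotopy_zero hGF h u
  mapsTo_one u hu :=
    ⟨G.projectionL F hGF u,
      ⟨Submodule.projectionL_apply_mem hGF u, hS u hu (right_mem_segment ℝ _ _)⟩,
      (graphHomotopy_one hGF h u).symm⟩
  eqOn s _ := forall_mem_image.2 fun _ hg => graphHomotopy_graph hGF hh s hg.1

theorem sublevel_deformation_retract_general [Preorder β] {Ψ : E → β} (hGF : G.IsTopCompl F)
    (hΨ : ∀ g ∈ G, QuasiconvexOn ℝ (F : Set E) fun k => Ψ (g + k)) (hh : MapsTo h G F)
    (hcont : ContinuousOn h G) (hmin : ∀ g ∈ G, ∀ k ∈ F, Ψ (g + h g) ≤ Ψ (g + k)) (κ : β) :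
    IsStrongDeformationRetraction (graphHomotopy hGF h) {u | Ψ u ≤ κ}
        ((fun g => g + h g) '' {g | g ∈ G ∧ Ψ (g + h g) ≤ κ}) ∧
      ∃ e : {g | g ∈ G ∧ Ψ (g + h g) ≤ κ} ≃ₕ {u | Ψ u ≤ κ}, ∀ g, (e g : E) = g + h g := by
  have hretract := isStrongDeformationRetraction_graphHomotopy (S := {u | Ψ u ≤ κ}) hGF hh hcont
    fun _ hu => segment_projectionL_subset_sublevel hGF hΨ hh hmin hu
  exact ⟨hretract, (graphHomeomorph hGF hh hcont fun _ hg => hg.1).toHomotopyEquiv.trans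
    hretract.homotopyEquiv, fun _ => rfl⟩

end GraphHomotopy

/-- Part (iv) of the finite-dimensional reduction (Lemma 2.10): the set
`{g + h g : g ∈ Λ̃^κ}` is a strong deformation retract of the sublevel set
`Λ^κ = {Ψ ≤ κ}` via the straight-line homotopy in the `G^⊥`-component, and in
particular the embedding `g ↦ g + h g` of `Λ̃^κ` into `Λ^κ` is a homotopy
equivalence. -/
theorem sublevel_deformation_retract
    (E : Type*) [NormedAddCommGroup E] [InnerProductSpace ℝ E]
    (G : Submodule ℝ E) [Submodule.HasOrthogonalProjection G]
    (Ψ : E → ℝ) (hΨ : Continuous Ψ)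
    (hconvex : ∀ g ∈ G, ConvexOn ℝ (Gᗮ : Set E) (fun h' => Ψ (g + h')))
    (h : E → E) (hmem : ∀ g ∈ G, h g ∈ Gᗮ)
    (hcont : ContinuousOn h (G : Set E))
    (hmin : ∀ g ∈ G, ∀ h' ∈ Gᗮ, Ψ (g + h g) ≤ Ψ (g + h'))
    (κ : ℝ) :
    ∀ (Λ Λt A : Set E) (ret : ℝ → E → E),
      Λ = {u : E | Ψ u ≤ κ} →
      Λt = {g : E | g ∈ G ∧ Ψ (g + h g) ≤ κ} →
      A = (fun g => g + h g) '' Λt →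
      (∀ (s : ℝ) (u : E), ret s u =
        (Submodule.orthogonalProjectionOnto G u : E)
          + (1 - s) • (u - (Submodule.orthogonalProjectionOnto G u : E))
          + s • h (Submodule.orthogonalProjectionOnto G u)) →
      -- strong deformation retract onto `A` via the straight-line homotopy
      ((∀ u : E, ret 0 u = u) ∧
       (∀ u ∈ Λ, ret 1 u ∈ A) ∧
       (∀ s ∈ Set.Icc (0:ℝ) 1, ∀ u ∈ Λ, ret s u ∈ Λ) ∧
       (∀ a ∈ A, ∀ s ∈ Set.Icc (0:ℝ) 1, ret s a = a) ∧
       ContinuousOn (fun p : ℝ × E => ret p.1 p.2) (Set.Icc (0:ℝ) 1 ×ˢ Λ) ∧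
       -- in particular the embedding `g ↦ g + h g` is a homotopy equivalence
       ∃ e : C(Λt, Λ), (∀ g : Λt, (e g : E) = (g : E) + h (g : E)) ∧
         ∃ f : C(Λ, Λt),
           ContinuousMap.Homotopic (e.comp f) (ContinuousMap.id _) ∧
           ContinuousMap.Homotopic (f.comp e) (ContinuousMap.id _)) := by
  rintro _ _ _ ret rfl rfl rfl hret
  obtain rfl : ret = graphHomotopy G.isTopCompl_orthogonal h := funext₂ hret
  obtain ⟨hretract, e, he⟩ := sublevel_deformation_retract_general G.isTopCompl_orthogonal
    (fun g hg => (hconvex g hg).quasiconvexOn) hmem hcont hmin κ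
  exact ⟨graphHomotopy_zero _ h, hretract.mapsTo_one, hretract.mapsTo,
    fun a ha s hs => hretract.eqOn s hs ha, hretract.continuousOn,
    e.toFun, he, e.invFun, e.right_inv, e.left_inv⟩
end

section
/- Let E be a real Hilbert space, G ⊆ E a closed subspace with orthogonal complement G^⊥, and let Ψ₀, Ψ₁: E → ℝ be Fréchet C^1 functionals such that there is ω > 0 with ⟨Ψᵢ′(u) − Ψᵢ′(v), u − v⟩ ≥ (ω/2)‖u − v‖² whenever u − v ∈ G^⊥, for i = 0, 1. Suppose h₀, h₁: G → G^⊥ satisfy ⟨Ψᵢ′(g + hᵢ(g)), h⟩ = 0 for all g ∈ G and h ∈ G^⊥ (i = 0, 1). Then for every g ∈ G: ‖h₁(g) − h₀(g)‖ ≤ (2/ω)·‖Ψ₁′(g + h₀(g)) − Ψ₀′(g + h₀(g))‖. -/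
/-! Put `x = g + h₀ g` and `y = g + h₁ g`, so that `x - y ∈ Gᗮ`. Both `DΨ₁(y)` and `DΨ₀(x)` vanish
on `Gᗮ`, so strong monotonicity of `DΨ₁` gives
`(ω / 2) ‖x - y‖² ≤ (DΨ₁(x) - DΨ₁(y)) (x - y) = (DΨ₁(x) - DΨ₀(x)) (x - y)`,
and the right-hand side is at most `‖DΨ₁(x) - DΨ₀(x)‖ ‖x - y‖`. -/

section StrongMonotonicity

variable {E : Type*} [SeminormedAddCommGroup E] [NormedSpace ℝ E]

/-- Strong monotonicity, with constant `c`, of a dual-valued map `F` on every translate of the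
subspace `W`. For the derivative of a differentiable functional this is uniform convexity of the
functional in the directions of `W`. -/
def StronglyMonotoneAlong (W : Submodule ℝ E) (c : ℝ) (F : E → StrongDual ℝ E) : Prop :=
  ∀ u v : E, u - v ∈ W → c * ‖u - v‖ ^ 2 ≤ F u (u - v) - F v (u - v)

namespace StronglyMonotoneAlong

variable {W : Submodule ℝ E} {c : ℝ} {F : E → StrongDual ℝ E} {x y : E}

theorem mul_norm_sub_sq_le_apply (hF : StronglyMonotoneAlong W c F)
    (hy : ∀ w ∈ W, F y w = 0) (hxy : x - y ∈ W) :
    c * ‖x - y‖ ^ 2 ≤ F x (x - y) := by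
  simpa only [hy _ hxy, sub_zero] using hF x y hxy

theorem norm_sub_le_inv_mul_norm_sub (hF : StronglyMonotoneAlong W c F) (hc : 0 < c)
    (hy : ∀ w ∈ W, F y w = 0) (hxy : x - y ∈ W)
    {l : StrongDual ℝ E} (hl : ∀ w ∈ W, l w = 0) :
    ‖x - y‖ ≤ c⁻¹ * ‖F x - l‖ := by
  have mul_norm_le : c * ‖x - y‖ * ‖x - y‖ ≤ ‖F x - l‖ * ‖x - y‖ := calc
    c * ‖x - y‖ * ‖x - y‖ = c * ‖x - y‖ ^ 2 := by ring
    _ ≤ F x (x - y) := hF.mul_norm_sub_sq_le_apply hy hxy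
    _ = (F x - l) (x - y) := by rw [sub_apply, hl _ hxy, sub_zero]
    _ ≤ ‖(F x - l) (x - y)‖ := Real.le_norm_self _
    _ ≤ ‖F x - l‖ * ‖x - y‖ := (F x - l).le_opNorm _
  obtain norm_eq_zero | norm_pos := (norm_nonneg (x - y)).eq_or_lt'
  · rw [norm_eq_zero]
    positivity
  · exact (le_inv_mul_iff₀ hc).2 (le_of_mul_le_mul_right mul_norm_le norm_pos)

end StronglyMonotoneAlong

theorem reduction_map_continuity_estimate_general {S : Set E} {W : Submodule ℝ E}
    {F₀ F₁ : E → StrongDual ℝ E} {c : ℝ} (hc : 0 < c) (hF₁ : StronglyMonotoneAlong W c F₁)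
    {h₀ h₁ : E → E} (hmem₀ : ∀ g ∈ S, h₀ g ∈ W) (hmem₁ : ∀ g ∈ S, h₁ g ∈ W)
    (hzero₀ : ∀ g ∈ S, ∀ w ∈ W, F₀ (g + h₀ g) w = 0)
    (hzero₁ : ∀ g ∈ S, ∀ w ∈ W, F₁ (g + h₁ g) w = 0) :
    ∀ g ∈ S, ‖h₁ g - h₀ g‖ ≤ c⁻¹ * ‖F₁ (g + h₀ g) - F₀ (g + h₀ g)‖ := by
  intro g hg
  have sub_mem : (g + h₀ g) - (g + h₁ g) ∈ W := by
    rw [add_sub_add_left_eq_sub]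
    exact W.sub_mem (hmem₀ g hg) (hmem₁ g hg)
  rw [norm_sub_rev, ← add_sub_add_left_eq_sub (h₀ g) (h₁ g) g]
  exact hF₁.norm_sub_le_inv_mul_norm_sub hc (hzero₁ g hg) sub_mem (hzero₀ g hg)

end StrongMonotonicity

/-- Key estimate in Lemma 2.10 (v): the reduction maps of two functionals
that are uniformly convex in the `G^⊥`-directions with the same constant `ω`
differ by at most `(2/ω)` times the distance between the derivatives. -/
theorem reduction_map_continuity_estimate
    (E : Type*) [NormedAddCommGroup E] [InnerProductSpace ℝ E]
    (G : Submodule ℝ E)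
    (Ψ₀ Ψ₁ : E → ℝ) (hΨ₀ : ContDiff ℝ 1 Ψ₀) (hΨ₁ : ContDiff ℝ 1 Ψ₁)
    (ω : ℝ) (hω : 0 < ω)
    (hconv₀ : ∀ u v : E, u - v ∈ Gᗮ →
      (ω / 2) * ‖u - v‖ ^ 2 ≤ fderiv ℝ Ψ₀ u (u - v) - fderiv ℝ Ψ₀ v (u - v))
    (hconv₁ : ∀ u v : E, u - v ∈ Gᗮ →
      (ω / 2) * ‖u - v‖ ^ 2 ≤ fderiv ℝ Ψ₁ u (u - v) - fderiv ℝ Ψ₁ v (u - v))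
    (h₀ h₁ : E → E)
    (hmem₀ : ∀ g ∈ G, h₀ g ∈ Gᗮ) (hmem₁ : ∀ g ∈ G, h₁ g ∈ Gᗮ)
    (hcrit₀ : ∀ g ∈ G, ∀ h ∈ Gᗮ, fderiv ℝ Ψ₀ (g + h₀ g) h = 0)
    (hcrit₁ : ∀ g ∈ G, ∀ h ∈ Gᗮ, fderiv ℝ Ψ₁ (g + h₁ g) h = 0) :
    ∀ g ∈ G, ‖h₁ g - h₀ g‖ ≤
      (2 / ω) * ‖fderiv ℝ Ψ₁ (g + h₀ g) - fderiv ℝ Ψ₀ (g + h₀ g)‖ := by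
  rw [← inv_div]
  exact reduction_map_continuity_estimate_general (half_pos hω) hconv₁ hmem₀ hmem₁ hcrit₀ hcrit₁
end

section
/- Let E be a real Hilbert space, G ⊆ E a closed subspace with orthogonal complement G^⊥, and Ψ: E → ℝ a Fréchet C^1 functional such that: (a) Ψ′ is globally Lipschitz on E; (b) there is ω > 0 with ⟨Ψ′(u) − Ψ′(v), u − v⟩ ≥ (ω/2)‖u − v‖² whenever u − v ∈ G^⊥; (c) h: G → G^⊥ satisfies ⟨Ψ′(g + h(g)), h′⟩ = 0 for all g ∈ G and h′ ∈ G^⊥; and (d) every sequence (g_j) in G with Ψ′(g_j + h(g_j)) → 0 has a convergent subsequence. Then every sequence (x_j) in E with Ψ′(x_j) → 0 as j → ∞ has a convergent subsequence; that is, Ψ satisfies the Palais–Smale condition. -/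
open Filter Topology

/-!
Write `F = Ψ'` and let `x j` satisfy `F (x j) → 0`. Splitting `x j = g j + w j` with `g j ∈ G` and
`w j ∈ H = Gᗮ`, compare `x j` with the point `g j + h (g j)` in the same `H`-fibre, at which `F`
vanishes on `H`. Strong monotonicity along the fibre bounds the distance of the two points by a
multiple of `‖F (x j)‖`, so `F (g j + h (g j)) → 0` by uniform continuity, and the reduced
Palais–Smale condition makes a subsequence of `g j` converge. The same bound, applied to `g + h l`
and `g + h g` in the fibre over `g`, shows that `h` is continuous, so `g j + h (g j)`, and with it
`x j`, converges along that subsequence.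
-/

/-- The Palais–Smale condition for a map `F` (in applications the derivative of a functional, or
its composition with a parametrization) on a set `S`: every sequence in `S` along which `F` tends
to zero has a convergent subsequence. The limit is not required to lie in `S`. -/
def IsPalaisSmaleOn {X V : Type*} [TopologicalSpace X] [TopologicalSpace V] [Zero V]
    (F : X → V) (S : Set X) : Prop :=
  ∀ x : ℕ → X, (∀ j, x j ∈ S) → Tendsto (fun j => F (x j)) atTop (𝓝 0) →
    ∃ σ : ℕ → ℕ, StrictMono σ ∧ ∃ l : X, Tendsto (x ∘ σ) atTop (𝓝 l)

section

variable {E : Type*} [SeminormedAddCommGroup E] [NormedSpace ℝ E]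

/-- Strong monotonicity with modulus `m` of a map `F` into the dual, between points that differ by
an element of `H`. For the derivative of a functional this is uniform convexity in the directions
of `H`. -/
def IsStronglyMonotoneAlong (H : Submodule ℝ E) (m : ℝ) (F : E → E →L[ℝ] ℝ) : Prop :=
  ∀ u v : E, u - v ∈ H → m * ‖u - v‖ ^ 2 ≤ F u (u - v) - F v (u - v)

variable {H : Submodule ℝ E} {m : ℝ} {F : E → E →L[ℝ] ℝ} {h : E → E}

namespace IsStronglyMonotoneAlong

theorem mul_norm_sub_le (hF : IsStronglyMonotoneAlong H m F) {u v : E} (huv : u - v ∈ H)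
    {A : E →L[ℝ] ℝ} (hA : A (u - v) = F v (u - v)) : m * ‖u - v‖ ≤ ‖F u - A‖ := by
  obtain hzero | hpos := (norm_nonneg (u - v)).eq_or_lt
  · simp [← hzero]
  refine le_of_mul_le_mul_right ?_ hpos
  calc m * ‖u - v‖ * ‖u - v‖ = m * ‖u - v‖ ^ 2 := by ring
    _ ≤ F u (u - v) - F v (u - v) := hF u v huv
    _ = (F u - A) (u - v) := by rw [sub_apply, hA]
    _ ≤ ‖F u - A‖ * ‖u - v‖ := (le_abs_self _).trans ((F u - A).le_opNorm _)

theorem tendsto_sub_nhds_zero (hF : IsStronglyMonotoneAlong H m F) (hm : 0 < m)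
    {ι : Type*} {p : Filter ι} {u v : ι → E} {A : ι → E →L[ℝ] ℝ}
    (huv : ∀ᶠ i in p, u i - v i ∈ H) (hA : ∀ᶠ i in p, A i (u i - v i) = F (v i) (u i - v i))
    (hlim : Tendsto (fun i => F (u i) - A i) p (𝓝 0)) :
    Tendsto (fun i => u i - v i) p (𝓝 0) := by
  have hbound : Tendsto (fun i => m⁻¹ * ‖F (u i) - A i‖) p (𝓝 0) := by
    simpa using hlim.norm.const_mul m⁻¹
  refine squeeze_zero_norm' ?_ hbound
  filter_upwards [huv, hA] with i huvi hAi
  exact (le_inv_mul_iff₀ hm).2 (hF.mul_norm_sub_le huvi hAi)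

theorem continuousOn_of_apply_add_eq_zero (hF : IsStronglyMonotoneAlong H m F) (hm : 0 < m)
    (hcont : Continuous F) {S : Set E} (hmem : Set.MapsTo h S H)
    (hcrit : ∀ g ∈ S, ∀ w ∈ H, F (g + h g) w = 0) : ContinuousOn h S := by
  intro l hl
  have hfibre : ∀ g ∈ S, g + h l - (g + h g) ∈ H := fun g hg => by
    simpa using H.sub_mem (hmem hl) (hmem hg)
  have hlim : Tendsto (fun g => F (g + h l) - F (l + h l)) (𝓝[S] l) (𝓝 0) := by
    rw [tendsto_sub_nhds_zero_iff]
    exact (hcont.comp (continuous_add_const (h l))).continuousWithinAt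
  have hdiff : Tendsto (fun g => g + h l - (g + h g)) (𝓝[S] l) (𝓝 0) := by
    refine hF.tendsto_sub_nhds_zero hm (A := fun _ => F (l + h l)) ?_ ?_ hlim
    · exact eventually_mem_nhdsWithin.mono hfibre
    · filter_upwards [eventually_mem_nhdsWithin] with g hg
      rw [hcrit l hl _ (hfibre g hg), hcrit g hg _ (hfibre g hg)]
  simpa [ContinuousWithinAt] using hdiff.const_sub (h l)

end IsStronglyMonotoneAlong

theorem palais_smale_from_reduction_general {G : Submodule ℝ E} (hG : IsClosed (G : Set E))
    (hGH : Codisjoint G H) (hcont : UniformContinuous F) (hm : 0 < m)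
    (hF : IsStronglyMonotoneAlong H m F) (hmem : Set.MapsTo h G H)
    (hcrit : ∀ g ∈ G, ∀ w ∈ H, F (g + h g) w = 0)
    (hred : IsPalaisSmaleOn (fun g => F (g + h g)) G) : IsPalaisSmaleOn F Set.univ := by
  intro x _ hx
  choose g w hg hw hgw using fun j => Submodule.codisjoint_iff_exists_add_eq.1 hGH (x j)
  have hfibre (j : ℕ) : x j - (g j + h (g j)) ∈ H := by
    simpa [← hgw j] using H.sub_mem (hw j) (hmem (hg j))
  have hclose : Tendsto (fun j => x j - (g j + h (g j))) atTop (𝓝 0) :=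
    hF.tendsto_sub_nhds_zero hm (A := 0) (.of_forall hfibre)
      (.of_forall fun j => (hcrit _ (hg j) _ (hfibre j)).symm) (by simpa using hx)
  have hFg : Tendsto (fun j => F (g j + h (g j))) atTop (𝓝 0) := by
    have hunif : Tendsto (fun j => (x j, g j + h (g j))) atTop (uniformity E) :=
      tendsto_uniformity_iff_dist_tendsto_zero.2 (by simpa [dist_eq_norm] using hclose.norm)
    exact hx.congr_uniformity (Tendsto.comp hcont hunif)
  obtain ⟨σ, hσ, l, hl⟩ := hred g hg hFg
  have hlG : l ∈ G := hG.mem_of_tendsto hl (.of_forall fun j => hg (σ j))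
  have hh : Tendsto (fun j => h (g (σ j))) atTop (𝓝 (h l)) :=
    (hF.continuousOn_of_apply_add_eq_zero hm hcont.continuous hmem hcrit l hlG).tendsto.comp
      (tendsto_nhdsWithin_iff.2 ⟨hl, .of_forall fun j => hg (σ j)⟩)
  refine ⟨σ, hσ, l + h l, ?_⟩
  simpa [Function.comp_def] using (hclose.comp hσ.tendsto_atTop).add (hl.add hh)

end

/-- Proposition 2.12 (core): the Palais–Smale condition for `Ψ` follows from
the Palais–Smale condition of its finite-dimensional reduction, the uniform
convexity of `Ψ` in the `G^⊥`-directions, and the Lipschitz continuity of its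
gradient. -/
theorem palais_smale_from_reduction
    (E : Type*) [NormedAddCommGroup E] [InnerProductSpace ℝ E] [CompleteSpace E]
    (G : Submodule ℝ E) (hG : IsClosed (G : Set E))
    (Ψ : E → ℝ) (hΨ : ContDiff ℝ 1 Ψ)
    (hLip : ∃ L : NNReal, LipschitzWith L (fun u => fderiv ℝ Ψ u))
    (ω : ℝ) (hω : 0 < ω)
    (hconv : ∀ u v : E, u - v ∈ Gᗮ →
      (ω / 2) * ‖u - v‖ ^ 2 ≤ fderiv ℝ Ψ u (u - v) - fderiv ℝ Ψ v (u - v))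
    (h : E → E)
    (hmem : ∀ g ∈ G, h g ∈ Gᗮ)
    (hcrit : ∀ g ∈ G, ∀ h' ∈ Gᗮ, fderiv ℝ Ψ (g + h g) h' = 0)
    (hPSred : ∀ g : ℕ → E, (∀ j, g j ∈ G) →
      Tendsto (fun j => fderiv ℝ Ψ (g j + h (g j))) atTop (𝓝 0) →
      ∃ σ : ℕ → ℕ, StrictMono σ ∧ ∃ x : E, Tendsto (g ∘ σ) atTop (𝓝 x)) :
    ∀ x : ℕ → E, Tendsto (fun j => fderiv ℝ Ψ (x j)) atTop (𝓝 0) →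
      ∃ σ : ℕ → ℕ, StrictMono σ ∧ ∃ l : E, Tendsto (x ∘ σ) atTop (𝓝 l) := by
  have : CompleteSpace G := hG.completeSpace_coe
  intro x
  exact palais_smale_from_reduction_general hG
    G.isCompl_orthogonal.codisjoint hLip.choose_spec.uniformContinuous (half_pos hω) hconv hmem
    hcrit hPSred x fun _ => Set.mem_univ _
end
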